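/- arXiv:1209.1167 — 3 statements merged into one kernel-verified Lean document; each statement's English description precedes it below -/
import Mathlib

section
/- Suppose K is a regular m-polytope with automorphism group Γ(K) = ⟨ρ_0, ..., ρ_{m-1}⟩ (distinguished generators with respect to a base flag), Schläfli type {p_1, ..., p_{m-1}}, and facet set A (the set of faces of rank m-1). Then there exists a regular (m+1)-polytope K̄ of Schläfli type {p_1, ..., p_{m-1}, 4} whose facets (faces of rank m) are isomorphic to K, such that when K is finite the automorphism group of K̄ has order |Γ(K)| · 2^{|A|}. Moreover, K̄ is finite if and only if K is finite. -/
/-- Two flags are `j`-adjacent (w.r.t. the rank function `rk`): they are distinct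
and agree in every face whose rank is different from `j`. -/
def IsPolytopeAdj {P : Type*} [PartialOrder P] (rk : P → ℤ) (j : ℤ) (c d : Flag P) : Prop :=
  c ≠ d ∧ ∀ z : P, rk z ≠ j → (z ∈ c ↔ z ∈ d)

/-- `P`, with strictly monotone rank function `rk` onto `{-1, 0, ..., n}`, is an
abstract polytope of rank `n`: it has a least and a greatest face, satisfies the
diamond condition and is strongly flag-connected. -/
structure IsAbstractPolytope {P : Type*} [PartialOrder P] (n : ℤ) (rk : P → ℤ) : Prop where
  neg_one_le : -1 ≤ n
  strictMono : ∀ {F G : P}, F < G → rk F < rk G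
  rank_range : Set.range rk = Set.Icc (-1 : ℤ) n
  exists_bot : ∃ F₀ : P, ∀ F, F₀ ≤ F
  exists_top : ∃ Fn : P, ∀ F, F ≤ Fn
  diamond : ∀ F G : P, F < G → rk G = rk F + 2 →
    ∃ H₁ H₂ : P, H₁ ≠ H₂ ∧ ∀ H : P, (F < H ∧ H < G) ↔ (H = H₁ ∨ H = H₂)
  strongly_connected : ∀ F G : P, F ≤ G →
    ∀ c d : Flag ↥(Set.Icc F G),
      Relation.ReflTransGen
        (fun c' d' => ∃ j : ℤ, IsPolytopeAdj (fun H => rk H.val) j c' d') c d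

/-- A covering of polytopes: an order- and rank-preserving map sending flags to
flags and sending `j`-adjacent pairs of flags to `j`-adjacent pairs of flags. -/
def IsPolytopeCovering {R Q : Type*} [PartialOrder R] [PartialOrder Q]
    (rkR : R → ℤ) (rkQ : Q → ℤ) (η : R → Q) : Prop :=
  Monotone η ∧ (∀ F : R, rkQ (η F) = rkR F) ∧
  (∀ c : Flag R, ∃ c' : Flag Q, η '' ↑c = ↑c') ∧
  (∀ (j : ℤ) (c d : Flag R) (c' d' : Flag Q), η '' ↑c = ↑c' → η '' ↑d = ↑d' →
    IsPolytopeAdj rkR j c d → IsPolytopeAdj rkQ j c' d')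

/-- A polytope is regular if its automorphism group (order-preserving bijections)
acts transitively on the set of flags. -/
def IsRegularPolytope {P : Type*} [PartialOrder P] : Prop :=
  ∀ c d : Flag P, ∃ e : P ≃o P, e '' (↑c : Set P) = (↑d : Set P)

/-- An abstract polytope of rank `n`, bundled with its carrier. -/
structure BundledPolytope (n : ℤ) where
  carrier : Type
  [po : PartialOrder carrier]
  rk : carrier → ℤ
  isPolytope : IsAbstractPolytope n rk

attribute [instance] BundledPolytope.po

/-!
Let `C₂^A` be the elementary abelian group of finitely supported vectors over the facets of `K`.
A proper face of `K̄` is a face `F` of `K` together with a coset in `C₂^A` of the subgroup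
generated by the facets above `F`. Each vector thus contributes one facet of `K̄`, a copy of `K`,
and two copies whose vectors differ only in the coordinate `a` are glued along the facet `a` of
`K`.

A flag of `K̄` amounts to a flag of `K` in one of these copies. Hence the flags of `K̄`
correspond to `C₂^A` times the flags of `K`, the group `C₂^A ⋊ Γ(K)` acts transitively on them,
and, polytope automorphisms being determined by the image of one flag, it is all of `Γ(K̄)`.
Toggling the coordinate of the base facet changes only the face of rank `m` of the base flag, so
it is the last distinguished generator. Its product with `ρ_{m-1}`, which moves the base facet,
squares to the translation by a vector with exactly two nonzero coordinates and therefore has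
order `4`.
-/

section Flags

variable {P Q : Type*} [PartialOrder P] [PartialOrder Q]

/-- Adjacency of flags: the edge relation of the flag graph. -/
def FlagAdj (rk : P → ℤ) (c d : Flag P) : Prop :=
  ∃ j, IsPolytopeAdj rk j c d

/-- Connectedness of the flag graph. -/
def FlagConnected (rk : P → ℤ) : Prop :=
  ∀ c d : Flag P, Relation.ReflTransGen (FlagAdj rk) c d

theorem flag_eq_of_subset {c d : Flag P} (h : (c : Set P) ⊆ d) : c = d :=
  Flag.ext (c.max_chain' d.Chain' h)

theorem apply_mem_smul_flag_iff {g : P ≃o P} {c : Flag P} {x : P} : g x ∈ g • c ↔ x ∈ c :=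
  g.injective.mem_set_image

theorem mem_flag_of_isBot {b : P} (hb : IsBot b) (c : Flag P) : b ∈ c :=
  Flag.mem_iff_forall_le_or_ge.2 fun x _ => Or.inl (hb x)

theorem mem_flag_of_isTop {t : P} (ht : IsTop t) (c : Flag P) : t ∈ c :=
  Flag.mem_iff_forall_le_or_ge.2 fun x _ => Or.inr (ht x)

namespace IsPolytopeAdj

variable {rk : P → ℤ} {j : ℤ} {c d : Flag P}

theorem symm (h : IsPolytopeAdj rk j c d) : IsPolytopeAdj rk j d c :=
  ⟨h.1.symm, fun z hz => (h.2 z hz).symm⟩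

theorem map {rk' : Q → ℤ} (e : P ≃o Q) (he : ∀ x, rk' (e x) = rk x)
    (h : IsPolytopeAdj rk j c d) : IsPolytopeAdj rk' j (Flag.map e c) (Flag.map e d) := by
  refine ⟨(Flag.map e).injective.ne h.1, e.surjective.forall.2 fun z hz => ?_⟩
  rw [he] at hz
  exact e.injective.mem_set_image.trans ((h.2 z hz).trans e.injective.mem_set_image.symm)

theorem exists_mem_rank_eq_notMem (h : IsPolytopeAdj rk j c d) : ∃ z ∈ c, rk z = j ∧ z ∉ d := by
  obtain ⟨z, hzc, hzd⟩ := Set.not_subset.1 fun hcd => h.1 (flag_eq_of_subset hcd)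
  exact ⟨z, hzc, by_contra fun hz => hzd ((h.2 z hz).1 hzc), hzd⟩

end IsPolytopeAdj

theorem FlagAdj.exists_mem_rank_eq {rk : P → ℤ} {c d : Flag P} (h : FlagAdj rk c d) {z : P}
    (hz : z ∈ c) : ∃ w ∈ d, rk w = rk z := by
  obtain ⟨j, h⟩ := h
  by_cases hzj : rk z = j
  · obtain ⟨w, hw, hwj, -⟩ := h.symm.exists_mem_rank_eq_notMem
    exact ⟨w, hw, hwj.trans hzj.symm⟩
  · exact ⟨z, (h.2 z hzj).1 hz, rfl⟩

namespace FlagConnected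

variable {rk : P → ℤ}

theorem of_orderIso {rk' : Q → ℤ} (h : FlagConnected rk) (e : P ≃o Q)
    (he : ∀ x, rk' (e x) = rk x) : FlagConnected rk' := fun c d => by
  have hcd := Relation.ReflTransGen.lift (p := FlagAdj rk') (Flag.map e)
    (fun _ _ ⟨j, hj⟩ => ⟨j, hj.map e he⟩) _ _ (h ((Flag.map e).symm c) ((Flag.map e).symm d))
  simpa only [Function.onFun, ← Flag.symm_map, Equiv.apply_symm_apply] using hcd

theorem of_subsingleton [Subsingleton P] : FlagConnected rk := fun c d => by
  rw [flag_eq_of_subset (c := c) (d := d) fun x _ =>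
    mem_flag_of_isTop (fun y => (Subsingleton.elim y x).le) d]

end FlagConnected

end Flags

namespace IsAbstractPolytope

section Rank

variable {P : Type*} [PartialOrder P] {n : ℤ} {rk : P → ℤ} (hP : IsAbstractPolytope n rk)
include hP

theorem rank_mem_Icc (x : P) : rk x ∈ Set.Icc (-1) n :=
  hP.rank_range ▸ Set.mem_range_self x

theorem neg_one_le_rank (x : P) : -1 ≤ rk x :=
  (hP.rank_mem_Icc x).1

theorem rank_le (x : P) : rk x ≤ n :=
  (hP.rank_mem_Icc x).2

theorem rank_mono {x y : P} (h : x ≤ y) : rk x ≤ rk y :=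
  h.eq_or_lt.elim (fun h => h ▸ le_rfl) fun h => (hP.strictMono h).le

theorem eq_of_le_of_rank_eq {x y : P} (h : x ≤ y) (hr : rk x = rk y) : x = y :=
  h.eq_or_lt.resolve_right fun h => (hP.strictMono h).ne hr

theorem rank_eq_neg_one_iff {x : P} : rk x = -1 ↔ IsBot x := by
  obtain ⟨b, hb⟩ := hP.exists_bot
  obtain ⟨y, hy⟩ : ∃ y, rk y = -1 := hP.rank_range.ge ⟨le_rfl, hP.neg_one_le⟩
  have hrb : rk b = -1 := le_antisymm (hy ▸ hP.rank_mono (hb y)) (hP.neg_one_le_rank b)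
  exact ⟨fun hx => hP.eq_of_le_of_rank_eq (hb x) (hrb.trans hx.symm) ▸ hb,
    fun hx => (hx b).antisymm (hb x) ▸ hrb⟩

theorem rank_eq_iff_isTop {x : P} : rk x = n ↔ IsTop x := by
  obtain ⟨t, ht⟩ := hP.exists_top
  obtain ⟨y, hy⟩ : ∃ y, rk y = n := hP.rank_range.ge ⟨hP.neg_one_le, le_rfl⟩
  have hrt : rk t = n := le_antisymm (hP.rank_le t) (hy ▸ hP.rank_mono (ht y))
  exact ⟨fun hx => hP.eq_of_le_of_rank_eq (ht x) (hx.trans hrt.symm) ▸ ht,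
    fun hx => (ht x).antisymm (hx t) ▸ hrt⟩

theorem rank_top [OrderTop P] : rk ⊤ = n :=
  hP.rank_eq_iff_isTop.2 isTop_top

theorem eq_of_mem_flag {c : Flag P} {x y : P} (hx : x ∈ c) (hy : y ∈ c) (h : rk x = rk y) :
    x = y :=
  (c.le_or_le hx hy).elim (hP.eq_of_le_of_rank_eq · h)
    fun h' => (hP.eq_of_le_of_rank_eq h' h.symm).symm

theorem lt_of_mem_flag {c : Flag P} {x y : P} (hx : x ∈ c) (hy : y ∈ c) (h : rk x < rk y) :
    x < y :=
  ((c.le_or_le hx hy).resolve_right fun h' => (hP.rank_mono h').not_gt h).lt_of_ne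
    fun h' => h.ne (congrArg rk h')

theorem wellFoundedLT : WellFoundedLT P :=
  StrictMono.wellFoundedLT (f := fun x => (rk x + 1).toNat) fun x y h => by
    have := hP.strictMono h
    have := hP.neg_one_le_rank x
    lia

theorem wellFoundedGT : WellFoundedGT P :=
  StrictAnti.wellFoundedGT (f := fun x => (n - rk x).toNat) fun x y h => by
    have := hP.strictMono h
    have := hP.rank_le y
    lia

protected theorem flagConnected : FlagConnected rk := by
  obtain ⟨b, hb⟩ := hP.exists_bot
  obtain ⟨t, ht⟩ := hP.exists_top
  have huniv : Set.Icc b t = Set.univ := Set.eq_univ_of_forall fun x => ⟨hb x, ht x⟩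
  exact FlagConnected.of_orderIso (hP.strongly_connected b t (hb t))
    ((OrderIso.setCongr _ _ huniv).trans OrderIso.Set.univ) fun _ => rfl

theorem exists_mem_flag_rank_eq (c : Flag P) {i : ℤ} (hi : i ∈ Set.Icc (-1) n) :
    ∃ z ∈ c, rk z = i := by
  obtain ⟨x, rfl⟩ := hP.rank_range.ge hi
  obtain ⟨d, hx⟩ := Flag.exists_mem x
  induction hP.flagConnected d c with
  | refl => exact ⟨x, hx, rfl⟩
  | tail _ hstep ih =>
    obtain ⟨z, hz, hzx⟩ := ih
    obtain ⟨w, hw, hwz⟩ := hstep.exists_mem_rank_eq hz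
    exact ⟨w, hw, hwz.trans hzx⟩

theorem isCoatom_iff_rank_eq [OrderTop P] {a : P} : IsCoatom a ↔ rk a = n - 1 := by
  have hlt {x : P} (hx : x < ⊤) : rk x < n := hP.rank_top ▸ hP.strictMono hx
  refine ⟨fun ha => ?_, fun ha => ⟨?_, fun b hab => ?_⟩⟩
  · have han := hlt ha.lt_top
    have := hP.neg_one_le_rank a
    obtain ⟨c, hac⟩ := Flag.exists_mem a
    obtain ⟨z, hzc, hz⟩ := hP.exists_mem_flag_rank_eq c (i := n - 1) ⟨by lia, by lia⟩
    by_contra hne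
    have hzt : z = ⊤ := ha.2 z (hP.lt_of_mem_flag hac hzc (by lia))
    have := hP.rank_top
    lia
  · rintro rfl
    have := hP.rank_top
    lia
  · have := hP.strictMono hab
    by_contra hb
    have := hlt (lt_top_iff_ne_top.2 hb)
    lia

end Rank

section Automorphisms

variable {P : Type*} [PartialOrder P] {n : ℤ} {rk : P → ℤ} (hP : IsAbstractPolytope n rk)
include hP

theorem rank_le_rank_apply (g : P ≃o P) (x : P) : rk x ≤ rk (g x) := by
  have := hP.wellFoundedLT
  induction x using WellFoundedLT.induction with
  | ind x ih =>
    rcases (hP.neg_one_le_rank x).eq_or_lt with hx | hx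
    · exact hx ▸ hP.neg_one_le_rank (g x)
    · obtain ⟨c, hxc⟩ := Flag.exists_mem x
      have := hP.rank_le x
      obtain ⟨y, hyc, hy⟩ := hP.exists_mem_flag_rank_eq c (i := rk x - 1) ⟨by lia, by lia⟩
      have hyx : y < x := hP.lt_of_mem_flag hyc hxc (by lia)
      have := ih y hyx
      have := hP.strictMono (g.strictMono hyx)
      lia

theorem rank_apply (g : P ≃o P) (x : P) : rk (g x) = rk x :=
  le_antisymm (by simpa using hP.rank_le_rank_apply g.symm (g x)) (hP.rank_le_rank_apply g x)

theorem adj_smul (g : P ≃o P) {j : ℤ} {c d : Flag P} (h : IsPolytopeAdj rk j c d) :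
    IsPolytopeAdj rk j (g • c) (g • d) :=
  h.map g (hP.rank_apply g)

theorem mem_Ioo_of_adj {j : ℤ} {c d : Flag P} (h : IsPolytopeAdj rk j c d) :
    j ∈ Set.Ioo (-1) n := by
  obtain ⟨z, -, rfl, hzd⟩ := h.exists_mem_rank_eq_notMem
  exact ⟨(hP.neg_one_le_rank z).lt_of_ne' fun hz =>
      hzd (mem_flag_of_isBot (hP.rank_eq_neg_one_iff.1 hz) d),
    (hP.rank_le z).lt_of_ne fun hz => hzd (mem_flag_of_isTop (hP.rank_eq_iff_isTop.1 hz) d)⟩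

theorem adj_unique {j : ℤ} {c d d' : Flag P} (h : IsPolytopeAdj rk j c d)
    (h' : IsPolytopeAdj rk j c d') : d = d' := by
  obtain ⟨hj, hjn⟩ := hP.mem_Ioo_of_adj h
  obtain ⟨u, hu, hur⟩ := hP.exists_mem_flag_rank_eq c (i := j - 1) ⟨by lia, by lia⟩
  obtain ⟨v, hv, hvr⟩ := hP.exists_mem_flag_rank_eq c (i := j + 1) ⟨by lia, by lia⟩
  obtain ⟨w, hw, hwj⟩ := hP.exists_mem_flag_rank_eq c (i := j) ⟨by lia, by lia⟩
  obtain ⟨z, hz, hzj, hzc⟩ := h.symm.exists_mem_rank_eq_notMem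
  obtain ⟨z', hz', hzj', hzc'⟩ := h'.symm.exists_mem_rank_eq_notMem
  obtain ⟨H₁, H₂, -, hH⟩ := hP.diamond u v (hP.lt_of_mem_flag hu hv (by lia)) (by lia)
  have eq_or_eq {e : Flag P} {y : P} (hue : u ∈ e) (hve : v ∈ e) (hy : y ∈ e) (hyj : rk y = j) :
      y = H₁ ∨ y = H₂ :=
    (hH y).1 ⟨hP.lt_of_mem_flag hue hy (by lia), hP.lt_of_mem_flag hy hve (by lia)⟩
  have hwH := eq_or_eq hu hv hw hwj
  have hzH := eq_or_eq ((h.2 u (by lia)).1 hu) ((h.2 v (by lia)).1 hv) hz hzj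
  have hzH' := eq_or_eq ((h'.2 u (by lia)).1 hu) ((h'.2 v (by lia)).1 hv) hz' hzj'
  have hzz' : z = z' := by grind
  refine flag_eq_of_subset fun x hx => ?_
  by_cases hxj : rk x = j
  · rwa [hP.eq_of_mem_flag hx hz (hxj.trans hzj.symm), hzz']
  · exact (h'.2 x hxj).1 ((h.2 x hxj).2 hx)

theorem eq_one_of_smul_eq {g : P ≃o P} {c : Flag P} (hg : g • c = c) : g = 1 := by
  have hfix (d : Flag P) : g • d = d := by
    induction hP.flagConnected c d with
    | refl => exact hg
    | tail _ hstep ih =>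
      obtain ⟨j, hj⟩ := hstep
      exact hP.adj_unique (ih ▸ hP.adj_smul g hj) hj
  ext x
  obtain ⟨d, hx⟩ := Flag.exists_mem x
  exact hP.eq_of_mem_flag (hfix d ▸ apply_mem_smul_flag_iff.2 hx) hx (hP.rank_apply g x)

theorem apply_ne_of_adj_smul {g : P ≃o P} {c : Flag P} {x : P} (hx : x ∈ c)
    (h : IsPolytopeAdj rk (rk x) c (g • c)) : g x ≠ x := fun hgx => by
  obtain ⟨z, hz, hzx, hzg⟩ := h.exists_mem_rank_eq_notMem
  rw [hP.eq_of_mem_flag hz hx hzx, ← hgx] at hzg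
  exact hzg (apply_mem_smul_flag_iff.2 hx)

theorem mul_self_eq_one_of_adj_smul {g : P ≃o P} {j : ℤ} {c : Flag P}
    (h : IsPolytopeAdj rk j c (g • c)) : g * g = 1 :=
  hP.eq_one_of_smul_eq (c := c) <| by
    rw [mul_smul]
    exact hP.adj_unique (hP.adj_smul g h) h.symm

end Automorphisms

end IsAbstractPolytope

/-- The coatoms of an order. In a polytope these are its facets; they serve as the coordinates
toggled in `PolytopeExtension`. -/
def Facet (K : Type*) [PartialOrder K] [OrderTop K] : Type _ :=
  {a : K // IsCoatom a}

namespace Facet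

variable {K L : Type*} [PartialOrder K] [OrderTop K] [PartialOrder L] [OrderTop L]

noncomputable instance : DecidableEq (Facet K) :=
  Classical.decEq _

/-- The map of facets induced by an order embedding that preserves coatoms. -/
def map (φ : K ↪o L) (hφ : ∀ a, IsCoatom a → IsCoatom (φ a)) (a : Facet K) : Facet L :=
  ⟨φ a.1, hφ a.1 a.2⟩

theorem map_injective (φ : K ↪o L) (hφ : ∀ a, IsCoatom a → IsCoatom (φ a)) :
    Function.Injective (map φ hφ) := fun _ _ h =>
  Subtype.ext (φ.injective (congrArg Subtype.val h))

instance : MulAction (K ≃o K) (Facet K) where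
  smul g := map g fun a => (g.isCoatom_iff a).2
  one_smul _ := rfl
  mul_smul _ _ _ := rfl

/-- A facet of the section above `F`, as a facet of `K`. -/
def ofIci {F : K} (a : Facet (Set.Ici F)) : Facet K :=
  ⟨a.1, IsCoatom.of_isCoatom_coe_Ici a.2⟩

theorem exists_image_ofIci_eq {F : K} {S : Finset (Facet K)} (hS : ∀ a ∈ S, F ≤ a.1) :
    ∃ V : Finset (Facet (Set.Ici F)), V.image ofIci = S := by
  obtain ⟨V, -, hV⟩ := Finset.subset_set_image_iff (s := Set.univ) (f := ofIci).1 fun a ha =>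
    ⟨⟨⟨a.1, hS a ha⟩, a.2.Ici _⟩, trivial, rfl⟩
  exact ⟨V, hV⟩

end Facet

/-- A face `F` of `K` together with a vector in the group `C₂^A`, where `A` is the set of facets
of `K`; the vector is encoded by its (finite) support. -/
structure PreFace (K : Type*) [PartialOrder K] [OrderTop K] where
  face : K
  supp : Finset (Facet K)

/-- `(F, S) ≤ (G, T)` says that `F ≤ G` and that `S`, `T` agree modulo the subgroup of `C₂^A`
generated by the facets above `F`. -/
instance {K : Type*} [PartialOrder K] [OrderTop K] : Preorder (PreFace K) where
  le x y := x.face ≤ y.face ∧ ∀ a ∈ symmDiff x.supp y.supp, x.face ≤ a.1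
  le_refl x := ⟨le_rfl, by simp⟩
  le_trans x y z hxy hyz := by
    refine ⟨hxy.1.trans hyz.1, fun a ha => ?_⟩
    rcases Finset.mem_union.1 (symmDiff_triangle x.supp y.supp z.supp ha) with h | h
    · exact hxy.2 a h
    · exact hxy.1.trans (hyz.2 a h)

/-- The poset `K̄`: its proper faces are the faces `F` of `K` together with a coset in `C₂^A` of
the subgroup generated by the facets above `F`, and a greatest face is added. -/
def PolytopeExtension (K : Type*) [PartialOrder K] [OrderTop K] : Type _ :=
  WithTop (Antisymmetrization (PreFace K) (· ≤ ·))

namespace PolytopeExtension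

section Basic

variable {K : Type*} [PartialOrder K] [OrderTop K]

instance : PartialOrder (PolytopeExtension K) :=
  inferInstanceAs (PartialOrder (WithTop _))

instance : OrderTop (PolytopeExtension K) :=
  inferInstanceAs (OrderTop (WithTop _))

/-- The face of `K̄` given by a face of `K` and a vector of `C₂^A`. -/
def mk (F : K) (S : Finset (Facet K)) : PolytopeExtension K :=
  WithTop.some (toAntisymmetrization (· ≤ ·) ⟨F, S⟩)

@[elab_as_elim, induction_eliminator]
theorem induction {motive : PolytopeExtension K → Prop} (top : motive ⊤)
    (mk : ∀ F S, motive (mk F S)) (x : PolytopeExtension K) : motive x :=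
  WithTop.recTopCoe (C := motive) top
    (Quotient.ind (motive := fun y => motive (WithTop.some y)) fun y => mk y.face y.supp) x

variable {F G : K} {S T : Finset (Facet K)}

theorem mk_le_mk : mk F S ≤ mk G T ↔ F ≤ G ∧ ∀ a ∈ symmDiff S T, F ≤ a.1 :=
  WithTop.coe_le_coe

theorem mk_lt_top : mk F S < ⊤ :=
  WithTop.coe_lt_top _

theorem mk_ne_top : mk F S ≠ ⊤ :=
  mk_lt_top.ne

theorem mk_le_mk_self : mk F T ≤ mk G T ↔ F ≤ G := by
  simp [mk_le_mk]

theorem mk_eq_mk : mk F S = mk G T ↔ F = G ∧ ∀ a ∈ symmDiff S T, F ≤ a.1 := by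
  rw [le_antisymm_iff, mk_le_mk, mk_le_mk, symmDiff_comm T S]
  constructor
  · rintro ⟨⟨hFG, hF⟩, hGF, -⟩
    exact ⟨hFG.antisymm hGF, hF⟩
  · rintro ⟨rfl, hF⟩
    exact ⟨⟨le_rfl, hF⟩, le_rfl, hF⟩

theorem mk_eq_mk_of_le (h : mk F S ≤ mk G T) : mk F S = mk F T :=
  mk_eq_mk.2 ⟨rfl, (mk_le_mk.1 h).2⟩

theorem mk_top_inj : mk (⊤ : K) S = mk ⊤ T ↔ S = T := by
  refine ⟨fun h => symmDiff_eq_bot.1 (Finset.eq_empty_of_forall_notMem fun a ha => ?_),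
    congrArg _⟩
  exact a.2.1 (top_le_iff.1 ((mk_eq_mk.1 h).2 a ha))

/-- The embedding of `K` onto the facet of `K̄` given by a vector of `C₂^A`. -/
def facetEmbedding (T : Finset (Facet K)) : K ↪o PolytopeExtension K :=
  OrderEmbedding.ofMapLEIff (mk · T) fun _ _ => mk_le_mk_self

theorem range_facetEmbedding (T : Finset (Facet K)) :
    Set.range (facetEmbedding T) = Set.Iic (mk ⊤ T) := by
  ext x
  constructor
  · rintro ⟨F, rfl⟩
    exact mk_le_mk_self.2 le_top
  · intro hx
    induction x with
    | top => exact (mk_ne_top (top_le_iff.1 hx)).elim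
    | mk F S => exact ⟨F, (mk_eq_mk_of_le hx).symm⟩

/-- The section of `K̄` below a facet is `K`. -/
noncomputable def facetIso (T : Finset (Facet K)) : K ≃o Set.Iic (mk (⊤ : K) T) :=
  (facetEmbedding T).orderIso.trans (OrderIso.setCongr _ _ (range_facetEmbedding T))

/-- The section of `K̄` between two proper faces is a section of `K`. -/
noncomputable def iccIso (T : Finset (Facet K)) (F G : K) :
    Set.Icc F G ≃o Set.Icc (mk F T) (mk G T) :=
  have range_eq : Set.range ((OrderEmbedding.subtype (· ∈ Set.Icc F G)).trans (facetEmbedding T)) =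
      Set.Icc (mk F T) (mk G T) :=
    (Set.range_comp (facetEmbedding T) Subtype.val).trans <| (congrArg _ Subtype.range_coe).trans <|
      OrderEmbedding.image_Icc _ (range_facetEmbedding T ▸ Set.ordConnected_Iic) F G
  OrderEmbedding.orderIso.trans (OrderIso.setCongr _ _ range_eq)

theorem exists_eq_mk_of_mem_flag_of_mk_top_mem {d : Flag (PolytopeExtension K)}
    (hT : mk ⊤ T ∈ d) {x : PolytopeExtension K} (hx : x ∈ d) :
    x = ⊤ ∨ ∃ F, x = mk F T := by
  induction x with
  | top => exact Or.inl rfl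
  | mk F S =>
    refine Or.inr ⟨F, (d.le_or_le hx hT).elim mk_eq_mk_of_le fun h => ?_⟩
    obtain rfl := top_le_iff.1 (mk_le_mk.1 h).1
    exact (mk_eq_mk_of_le h).symm

end Basic

section AffineEmbedding

variable {K L : Type*} [PartialOrder K] [OrderTop K] [PartialOrder L] [OrderTop L]

/-- The affine map `v ↦ φ v + T` of the groups `C₂^A`, combined with `φ` on faces. -/
noncomputable def affineEmbedding (φ : K ↪o L) (hφ : ∀ a, IsCoatom a → IsCoatom (φ a))
    (T : Finset (Facet L)) : PolytopeExtension K ↪o PolytopeExtension L :=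
  have map_le_map (x y : PreFace K) :
      PreFace.mk (φ x.face) (symmDiff (x.supp.image (Facet.map φ hφ)) T) ≤
        PreFace.mk (φ y.face) (symmDiff (y.supp.image (Facet.map φ hφ)) T) ↔ x ≤ y := by
    refine and_congr φ.le_iff_le ?_
    rw [symmDiff_symmDiff_symmDiff_comm, symmDiff_self, symmDiff_bot,
      ← Finset.image_symmDiff _ _ (Facet.map_injective φ hφ), Finset.forall_mem_image]
    exact forall₂_congr fun a _ => φ.le_iff_le
  OrderEmbedding.withTopMap <| OrderEmbedding.ofMapLEIff
    (OrderHom.antisymmetrization ⟨_, fun x y => (map_le_map x y).2⟩)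
    fun x y => Quotient.inductionOn₂ x y map_le_map

end AffineEmbedding

section UpperSection

variable {K : Type*} [PartialOrder K] [OrderTop K]

/-- The extension of the section of `K` above `F`, as a part of `K̄`. -/
noncomputable def iciEmbedding (F : K) (S : Finset (Facet K)) :
    PolytopeExtension (Set.Ici F) ↪o PolytopeExtension K :=
  affineEmbedding (OrderEmbedding.subtype _) (fun _ => IsCoatom.of_isCoatom_coe_Ici) S

@[simp]
theorem iciEmbedding_mk (F : K) (S : Finset (Facet K)) (G : Set.Ici F)
    (U : Finset (Facet (Set.Ici F))) :
    iciEmbedding F S (mk G U) = mk G.1 (symmDiff (U.image Facet.ofIci) S) := rfl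

theorem range_iciEmbedding (F : K) (S : Finset (Facet K)) :
    Set.range (iciEmbedding F S) = Set.Ici (mk F S) := by
  ext x
  constructor
  · rintro ⟨y, rfl⟩
    induction y with
    | top => exact le_top (α := PolytopeExtension K)
    | mk G U =>
      rw [Set.mem_Ici, iciEmbedding_mk, mk_le_mk, symmDiff_comm, symmDiff_symmDiff_cancel_right,
        Finset.forall_mem_image]
      exact ⟨G.2, fun a _ => a.1.2⟩
  · intro hx
    induction x with
    | top => exact ⟨⊤, rfl⟩
    | mk G U =>
      obtain ⟨hFG, hF⟩ := mk_le_mk.1 hx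
      obtain ⟨V, hV⟩ := Facet.exists_image_ofIci_eq hF
      refine ⟨mk ⟨G, hFG⟩ V, ?_⟩
      rw [iciEmbedding_mk, hV, symmDiff_comm S, symmDiff_symmDiff_cancel_right]

/-- The section of `K̄` above `(F, S)` is the extension of the section of `K` above `F`. -/
noncomputable def iciIso (F : K) (S : Finset (Facet K)) :
    PolytopeExtension (Set.Ici F) ≃o Set.Icc (mk F S) ⊤ :=
  (iciEmbedding F S).orderIso.trans
    (OrderIso.setCongr _ _ ((range_iciEmbedding F S).trans Set.Icc_top.symm))

end UpperSection

section Flags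

variable {K : Type*} [PartialOrder K] [OrderTop K]

/-- The flag of `K̄` consisting of `⊤` and the copy of `c` in the facet given by `T`. -/
def liftFlag (T : Finset (Facet K)) (c : Flag K) : Flag (PolytopeExtension K) where
  carrier := insert ⊤ (facetEmbedding T '' c)
  Chain' := (c.chain_le.image (facetEmbedding T)).insert fun _ _ _ => Or.inr le_top
  max_chain' s hs hcs := by
    have mk_mem {F : K} (hF : F ∈ c) : mk F T ∈ s := hcs (Or.inr ⟨F, hF, rfl⟩)
    refine hcs.antisymm fun x hx => ?_
    obtain ⟨d, hsd⟩ := hs.exists_subset_flag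
    obtain rfl | ⟨F, rfl⟩ :=
      exists_eq_mk_of_mem_flag_of_mk_top_mem (hsd (mk_mem c.top_mem)) (hsd hx)
    · exact Or.inl rfl
    · refine Or.inr ⟨F, Flag.mem_iff_forall_le_or_ge.2 fun G hG => ?_, rfl⟩
      exact (hs.total hx (mk_mem hG)).imp mk_le_mk_self.1 mk_le_mk_self.1

variable {F : K} {S T : Finset (Facet K)} {c : Flag K}

theorem mk_mem_liftFlag : mk F S ∈ liftFlag T c ↔ F ∈ c ∧ mk F S = mk F T := by
  constructor
  · rintro (h | ⟨G, hG, h⟩)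
    · exact (mk_ne_top h).elim
    · obtain rfl := (mk_eq_mk.1 h).1
      exact ⟨hG, h.symm⟩
  · rintro ⟨hF, h⟩
    exact Or.inr ⟨F, hF, h.symm⟩

theorem mk_mem_liftFlag_self : mk F T ∈ liftFlag T c ↔ F ∈ c := by
  simp [mk_mem_liftFlag]

theorem mk_top_mem_liftFlag : mk ⊤ S ∈ liftFlag T c ↔ S = T := by
  simp [mk_mem_liftFlag, mk_top_inj, c.top_mem]

theorem exists_mk_top_mem_flag [WellFoundedGT K] (d : Flag (PolytopeExtension K)) :
    ∃ T, mk ⊤ T ∈ d := by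
  have hne : ∃ F T, mk F T ∈ d := by
    by_contra! hd
    refine hd ⊤ ∅ (Flag.mem_iff_forall_le_or_ge.2 fun x hx => ?_)
    induction x with
    | top => exact Or.inl le_top
    | mk F S => exact (hd F S hx).elim
  obtain ⟨F, ⟨T, hT⟩, hF⟩ := exists_maximal_of_wellFoundedGT _ hne
  refine ⟨T, Flag.mem_iff_forall_le_or_ge.2 fun x hx => ?_⟩
  induction x with
  | top => exact Or.inl le_top
  | mk G U =>
    refine Or.inr (le_trans ?_ (mk_le_mk_self.2 (le_top (a := F))))
    refine (d.le_or_le hx hT).elim id fun h => ?_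
    obtain rfl := (mk_le_mk.1 h).1.antisymm (hF ⟨U, hx⟩ (mk_le_mk.1 h).1)
    exact (mk_eq_mk_of_le h).ge

theorem exists_eq_liftFlag [WellFoundedGT K] (d : Flag (PolytopeExtension K)) :
    ∃ T c, d = liftFlag T c := by
  obtain ⟨T, hT⟩ := exists_mk_top_mem_flag d
  let c : Flag K :=
    { carrier := facetEmbedding T ⁻¹' d
      Chain' := d.chain_le.preimage_embedding _
      max_chain' := fun s hs hcs => hcs.antisymm fun F hF =>
        Flag.mem_iff_forall_le_or_ge.2 fun x hx => by
          obtain rfl | ⟨G, rfl⟩ := exists_eq_mk_of_mem_flag_of_mk_top_mem hT hx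
          · exact Or.inl le_top
          · exact (hs.total hF (hcs hx)).imp mk_le_mk_self.2 mk_le_mk_self.2 }
  refine ⟨T, c, flag_eq_of_subset fun x hx => ?_⟩
  obtain rfl | ⟨G, rfl⟩ := exists_eq_mk_of_mem_flag_of_mk_top_mem hT hx
  · exact Or.inl rfl
  · exact Or.inr ⟨G, hx, rfl⟩

end Flags

section Rank

variable {K : Type*} [PartialOrder K] [OrderTop K] {rk : K → ℤ}

/-- The rank function of `K̄`: proper faces inherit the rank of the underlying face of `K`. -/
def rank (rk : K → ℤ) : PolytopeExtension K → ℤ :=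
  WithTop.recTopCoe (rk ⊤ + 1)
    (Quotient.lift (fun x => rk x.face) fun _ _ h => congrArg rk (h.1.1.antisymm h.2.1))

@[simp]
theorem rank_top : rank rk ⊤ = rk ⊤ + 1 := rfl

@[simp]
theorem rank_mk (F : K) (S : Finset (Facet K)) : rank rk (mk F S) = rk F := rfl

theorem rank_iciEmbedding (F : K) (S : Finset (Facet K)) (x : PolytopeExtension (Set.Ici F)) :
    rank rk (iciEmbedding F S x) = rank (fun G : Set.Ici F => rk G) x := by
  induction x with
  | top => rfl
  | mk G U => rfl

theorem liftFlag_adj {j : ℤ} {c d : Flag K} (h : IsPolytopeAdj rk j c d)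
    (T : Finset (Facet K)) : IsPolytopeAdj (rank rk) j (liftFlag T c) (liftFlag T d) := by
  obtain ⟨F, hFc, -, hFd⟩ := h.exists_mem_rank_eq_notMem
  have hne : liftFlag T c ≠ liftFlag T d := fun hcd =>
    hFd (mk_mem_liftFlag_self.1 (hcd ▸ mk_mem_liftFlag_self.2 hFc))
  refine ⟨hne, fun x hx => ?_⟩
  induction x with
  | top => exact iff_of_true (Flag.top_mem _) (Flag.top_mem _)
  | mk G U => rw [mk_mem_liftFlag, mk_mem_liftFlag, h.2 G hx]

/-- Toggling the coordinate of a facet only affects the faces that are not below that facet; in a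
flag through it, the only such proper face is `⊤`. -/
theorem liftFlag_toggle_adj (rk : K → ℤ) {a : Facet K} {c : Flag K} (ha : a.1 ∈ c)
    (T : Finset (Facet K)) :
    IsPolytopeAdj (rank rk) (rk ⊤) (liftFlag T c) (liftFlag (symmDiff T {a}) c) := by
  refine ⟨fun h => ?_, fun x hx => ?_⟩
  · have hT : T = symmDiff T {a} := mk_top_mem_liftFlag.1 (h ▸ mk_top_mem_liftFlag.2 rfl)
    exact Finset.singleton_ne_empty a (symmDiff_eq_left.1 hT.symm)
  · induction x with
    | top => exact iff_of_true (Flag.top_mem _) (Flag.top_mem _)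
    | mk F S =>
      rw [mk_mem_liftFlag, mk_mem_liftFlag]
      refine and_congr_right fun hF => ?_
      have hFt : F ≠ ⊤ := fun h => hx (h ▸ rfl)
      have hFa : F ≤ a.1 := (c.le_or_le hF ha).elim id fun h => (a.2.le_iff.1 h).elim
        (fun h => (hFt h).elim) le_of_eq
      have htoggle : mk F T = mk F (symmDiff T {a}) :=
        mk_eq_mk.2 ⟨rfl, by simpa using hFa⟩
      rw [htoggle]

theorem flagConnected [WellFoundedGT K] (h : FlagConnected rk) : FlagConnected (rank rk) := by
  have liftFlag_connected (T V : Finset (Facet K)) (c d : Flag K) :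
      Relation.ReflTransGen (FlagAdj (rank rk)) (liftFlag T c) (liftFlag (symmDiff T V) d) := by
    have same_facet (U : Finset (Facet K)) (c d : Flag K) :
        Relation.ReflTransGen (FlagAdj (rank rk)) (liftFlag U c) (liftFlag U d) :=
      Relation.ReflTransGen.lift (liftFlag U) (fun _ _ ⟨j, hj⟩ => ⟨j, liftFlag_adj hj U⟩) _ _
        (h c d)
    induction V using Finset.induction_on generalizing d with
    | empty => simpa [← Finset.bot_eq_empty] using same_facet T c d
    | insert a V ha ih =>
      obtain ⟨e, hae⟩ := Flag.exists_mem a.1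
      have hinsert : insert a V = symmDiff V {a} := by
        ext b
        grind [Finset.mem_symmDiff]
      rw [hinsert, ← symmDiff_assoc]
      exact ((ih e).tail ⟨_, liftFlag_toggle_adj rk hae _⟩).trans (same_facet _ e d)
  intro c d
  obtain ⟨T, c, rfl⟩ := exists_eq_liftFlag c
  obtain ⟨U, d, rfl⟩ := exists_eq_liftFlag d
  simpa using liftFlag_connected T (symmDiff T U) c d

end Rank

section Polytope

variable {K : Type*} [PartialOrder K] [OrderTop K] {n : ℤ} {rk : K → ℤ}

theorem rank_strictMono (hrk : StrictMono rk) : StrictMono (rank rk) := fun x y hxy => by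
  induction y with
  | top =>
    induction x with
    | top => exact (lt_irrefl _ hxy).elim
    | mk F S => exact Int.lt_add_one_of_le (hrk.monotone le_top)
  | mk G T =>
    induction x with
    | top => exact (not_top_lt hxy).elim
    | mk F S =>
      rw [mk_eq_mk_of_le hxy.le] at hxy
      exact hrk ((facetEmbedding T).lt_iff_lt.1 hxy)

theorem range_rank : Set.range (rank rk) = insert (rk ⊤ + 1) (Set.range rk) := by
  ext i
  constructor
  · rintro ⟨x, rfl⟩
    induction x with
    | top => exact Or.inl rfl
    | mk F S => exact Or.inr ⟨F, rfl⟩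
  · rintro (rfl | ⟨F, rfl⟩)
    exacts [⟨⊤, rfl⟩, ⟨mk F ∅, rfl⟩]

theorem mk_lt_and_lt_top_iff {a : Facet K} {S : Finset (Facet K)} {x : PolytopeExtension K} :
    mk a.1 S < x ∧ x < ⊤ ↔ x = mk ⊤ S ∨ x = mk ⊤ (symmDiff S {a}) := by
  constructor
  · rintro ⟨hx, hxt⟩
    induction x with
    | top => exact (lt_irrefl _ hxt).elim
    | mk G T =>
      obtain ⟨haG, hST⟩ := mk_le_mk.1 hx.le
      rcases a.2.le_iff.1 haG with rfl | rfl
      · have hsupp : symmDiff S T ⊆ {a} := fun b hb =>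
          Finset.mem_singleton.2 (Subtype.ext
            (((a.2.le_iff.1 (hST b hb)).resolve_left b.2.1)))
        rw [mk_top_inj, mk_top_inj, ← symmDiff_symmDiff_cancel_left S T]
        rcases Finset.subset_singleton_iff.1 hsupp with h | h
        · exact Or.inl (by rw [h, ← Finset.bot_eq_empty, symmDiff_bot])
        · exact Or.inr (by rw [h])
      · exact (hx.ne (mk_eq_mk_of_le hx.le)).elim
  · have hlt : mk a.1 S < mk ⊤ S := (facetEmbedding S).lt_iff_lt.2 a.2.lt_top
    have htoggle : mk a.1 S = mk a.1 (symmDiff S {a}) := mk_eq_mk.2 ⟨rfl, by simp⟩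
    rintro (rfl | rfl)
    · exact ⟨hlt, mk_lt_top⟩
    · exact ⟨htoggle ▸ (facetEmbedding _).lt_iff_lt.2 a.2.lt_top, mk_lt_top⟩

theorem diamond_mk_top (a : Facet K) (S : Finset (Facet K)) :
    ∃ H₁ H₂ : PolytopeExtension K, H₁ ≠ H₂ ∧
      ∀ H, (mk a.1 S < H ∧ H < ⊤) ↔ (H = H₁ ∨ H = H₂) :=
  ⟨mk ⊤ S, mk ⊤ (symmDiff S {a}), by simp [mk_top_inj, eq_comm (a := S)],
    fun _ => mk_lt_and_lt_top_iff⟩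

theorem diamond_mk_mk {F G : K} (h : ∃ H₁ H₂ : K, H₁ ≠ H₂ ∧
      ∀ H : K, (F < H ∧ H < G) ↔ (H = H₁ ∨ H = H₂)) (T : Finset (Facet K)) :
    ∃ H₁ H₂ : PolytopeExtension K, H₁ ≠ H₂ ∧
      ∀ H, (mk F T < H ∧ H < mk G T) ↔ (H = H₁ ∨ H = H₂) := by
  obtain ⟨H₁, H₂, hne, hH⟩ := h
  have mk_lt_mk {F G : K} : mk F T < mk G T ↔ F < G := (facetEmbedding T).lt_iff_lt
  have mk_inj {F G : K} : mk F T = mk G T ↔ F = G := (facetEmbedding T).injective.eq_iff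
  refine ⟨mk H₁ T, mk H₂ T, mk_inj.not.2 hne, fun x => ⟨fun ⟨hFx, hxG⟩ => ?_, ?_⟩⟩
  · induction x with
    | top => exact (not_top_lt hxG).elim
    | mk H S =>
      have hS : mk H S = mk H T := mk_eq_mk_of_le hxG.le
      rw [hS] at hFx hxG ⊢
      rw [mk_inj, mk_inj, ← hH]
      exact ⟨mk_lt_mk.1 hFx, mk_lt_mk.1 hxG⟩
  · rintro (rfl | rfl) <;> rw [mk_lt_mk, mk_lt_mk, hH] <;> simp

theorem flagConnected_Icc_mk_mk {F G : K} (h : FlagConnected fun H : Set.Icc F G => rk H)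
    (T : Finset (Facet K)) :
    FlagConnected fun x : Set.Icc (mk F T) (mk G T) => rank rk x :=
  h.of_orderIso (iccIso T F G) fun _ => rfl

theorem flagConnected_Icc_mk_top [WellFoundedGT K] {F : K}
    (h : FlagConnected fun H : Set.Icc F ⊤ => rk H) (S : Finset (Facet K)) :
    FlagConnected fun x : Set.Icc (mk F S) ⊤ => rank rk x := by
  have hIci : FlagConnected fun H : Set.Ici F => rk H :=
    h.of_orderIso (OrderIso.setCongr _ _ Set.Icc_top) fun _ => rfl
  exact (flagConnected hIci).of_orderIso (iciIso F S) (rank_iciEmbedding F S)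

theorem isAbstractPolytope (hK : IsAbstractPolytope n rk) :
    IsAbstractPolytope (n + 1) (rank rk) where
  neg_one_le := hK.neg_one_le.trans (lt_add_one n).le
  strictMono h := rank_strictMono (fun _ _ => hK.strictMono) h
  rank_range := by
    rw [range_rank, hK.rank_top, hK.rank_range]
    have := hK.neg_one_le
    ext i
    simp only [Set.mem_insert_iff, Set.mem_Icc]
    lia
  exists_bot := by
    obtain ⟨b, hb⟩ := hK.exists_bot
    refine ⟨mk b ∅, fun x => ?_⟩
    induction x with
    | top => exact le_top
    | mk F S => exact mk_le_mk.2 ⟨hb F, fun a _ => hb a.1⟩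
  exists_top := ⟨⊤, fun _ => le_top⟩
  diamond x y hxy hr := by
    induction x with
    | top => exact (not_top_lt hxy).elim
    | mk F S =>
      induction y with
      | top =>
        rw [rank_top, rank_mk, hK.rank_top] at hr
        exact diamond_mk_top ⟨F, hK.isCoatom_iff_rank_eq.2 (by lia)⟩ S
      | mk G T =>
        have hS : mk F S = mk F T := mk_eq_mk_of_le hxy.le
        rw [hS] at hxy ⊢
        exact diamond_mk_mk (hK.diamond F G ((facetEmbedding T).lt_iff_lt.1 hxy) hr) T
  strongly_connected x y hxy := by
    have := hK.wellFoundedGT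
    induction y with
    | top =>
      induction x with
      | top =>
        have : Subsingleton (Set.Icc (⊤ : PolytopeExtension K) ⊤) := by
          rw [Set.Icc_self]; infer_instance
        exact FlagConnected.of_subsingleton
      | mk F S => exact flagConnected_Icc_mk_top (hK.strongly_connected F ⊤ le_top) S
    | mk G T =>
      induction x with
      | top => exact (mk_ne_top (top_le_iff.1 hxy)).elim
      | mk F S =>
        have hS : mk F S = mk F T := mk_eq_mk_of_le hxy
        rw [hS] at hxy ⊢
        exact flagConnected_Icc_mk_mk (hK.strongly_connected F G (mk_le_mk_self.1 hxy)) T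

end Polytope

section Automorphisms

open scoped Pointwise

variable {K : Type*} [PartialOrder K] [OrderTop K]

/-- The automorphism of `K̄` given by the affine map `v ↦ g v + T` of `C₂^A` and by the
automorphism `g` of `K`. -/
noncomputable def affine (g : K ≃o K) (T : Finset (Facet K)) :
    PolytopeExtension K ≃o PolytopeExtension K :=
  RelIso.ofSurjective (affineEmbedding g.toOrderEmbedding (fun a => (g.isCoatom_iff a).2) T)
    fun x => by
      induction x with
      | top => exact ⟨⊤, rfl⟩
      | mk F S =>
        have hmk : affineEmbedding g.toOrderEmbedding _ T (mk (g⁻¹ F) (g⁻¹ • symmDiff S T)) =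
            mk (g (g⁻¹ F)) (symmDiff (g • g⁻¹ • symmDiff S T) T) := rfl
        refine ⟨_, hmk.trans ?_⟩
        rw [smul_inv_smul, symmDiff_symmDiff_cancel_right, RelIso.apply_inv_self]

variable (g h : K ≃o K) (S T U : Finset (Facet K)) (F : K) (a : Facet K) (c : Flag K)

@[simp]
theorem affine_mk : affine g T (mk F S) = mk (g F) (symmDiff (g • S) T) := rfl

theorem affine_mk_empty : affine g T (mk F ∅) = mk (g F) T := by
  rw [affine_mk, Finset.smul_finset_empty, ← Finset.bot_eq_empty, bot_symmDiff]

theorem affine_mul_affine :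
    affine g T * affine h U = affine (g * h) (symmDiff (g • U) T) := by
  ext x
  induction x with
  | top => rfl
  | mk F S =>
    rw [RelIso.mul_apply, affine_mk, affine_mk, affine_mk, RelIso.mul_apply,
      Finset.smul_finset_symmDiff, smul_smul, symmDiff_assoc]

theorem affine_one_empty : affine (1 : K ≃o K) ∅ = 1 := by
  ext x
  induction x with
  | top => rfl
  | mk F S => simp [← Finset.bot_eq_empty]

theorem affine_smul_liftFlag :
    affine g T • liftFlag U c = liftFlag (symmDiff (g • U) T) (g • c) := by
  refine flag_eq_of_subset ?_
  rintro _ ⟨_, rfl | ⟨F, hF, rfl⟩, rfl⟩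
  · exact Or.inl rfl
  · exact Or.inr ⟨g F, ⟨F, hF, rfl⟩, rfl⟩

theorem affine_smul_liftFlag_empty : affine g T • liftFlag ∅ c = liftFlag T (g • c) := by
  rw [affine_smul_liftFlag, Finset.smul_finset_empty, ← Finset.bot_eq_empty, bot_symmDiff]

theorem affine_injective :
    Function.Injective fun p : (K ≃o K) × Finset (Facet K) => affine p.1 p.2 := by
  rintro ⟨g, T⟩ ⟨h, U⟩ hgh
  have hmk (F : K) : mk (g F) T = mk (h F) U := by
    rw [← affine_mk_empty, ← affine_mk_empty]
    exact DFunLike.congr_fun hgh _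
  have htop := hmk ⊤
  rw [map_top, map_top, mk_top_inj] at htop
  exact Prod.ext (RelIso.ext fun F => (mk_eq_mk.1 (hmk F)).1) htop

theorem affine_surjective {n : ℤ} {rk : K → ℤ} (hK : IsAbstractPolytope n rk)
    (hreg : IsRegularPolytope (P := K)) :
    Function.Surjective fun p : (K ≃o K) × Finset (Facet K) => affine p.1 p.2 := fun f => by
  have := hK.wellFoundedGT
  obtain ⟨c⟩ : Nonempty (Flag K) := inferInstance
  obtain ⟨T, d, hd⟩ := exists_eq_liftFlag (f • liftFlag ∅ c)
  obtain ⟨g, hg⟩ := hreg c d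
  have hgcd : g • c = d := Flag.ext hg
  have hgf : affine g T • liftFlag ∅ c = f • liftFlag ∅ c := by
    rw [affine_smul_liftFlag_empty, hgcd, hd]
  refine ⟨(g, T), (inv_mul_eq_one.1 <|
    (isAbstractPolytope hK).eq_one_of_smul_eq (c := liftFlag ∅ c) ?_).symm⟩
  rw [mul_smul, hgf, inv_smul_smul]

theorem isRegularPolytope [WellFoundedGT K] (hreg : IsRegularPolytope (P := K)) :
    IsRegularPolytope (P := PolytopeExtension K) := fun c d => by
  obtain ⟨T, c, rfl⟩ := exists_eq_liftFlag c
  obtain ⟨U, d, rfl⟩ := exists_eq_liftFlag d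
  obtain ⟨g, hg⟩ := hreg c d
  have hgcd : g • c = d := Flag.ext hg
  refine ⟨affine g (symmDiff (g • T) U), ?_⟩
  have h := affine_smul_liftFlag g (symmDiff (g • T) U) T c
  rw [symmDiff_symmDiff_cancel_left, hgcd] at h
  exact congrArg SetLike.coe h

theorem card_orderIso {n : ℤ} {rk : K → ℤ} (hK : IsAbstractPolytope n rk)
    (hreg : IsRegularPolytope (P := K)) [Finite K] :
    Nat.card (PolytopeExtension K ≃o PolytopeExtension K) =
      Nat.card (K ≃o K) * 2 ^ Nat.card {F : K // rk F = n - 1} := by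
  have : Finite (Facet K) := inferInstanceAs (Finite {a : K // IsCoatom a})
  have := Fintype.ofFinite (Facet K)
  have hfacets : Nat.card (Facet K) = Nat.card {F : K // rk F = n - 1} :=
    Nat.card_congr (Equiv.subtypeEquivRight fun _ => hK.isCoatom_iff_rank_eq)
  rw [← Nat.card_eq_of_bijective _ ⟨affine_injective, affine_surjective hK hreg⟩, Nat.card_prod,
    ← hfacets, Nat.card_eq_fintype_card (α := Finset _), Fintype.card_finset,
    Nat.card_eq_fintype_card (α := Facet K)]

theorem finite_iff : Finite (PolytopeExtension K) ↔ Finite K := by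
  refine ⟨fun _ => Finite.of_injective _ (facetEmbedding ∅).injective, fun _ => ?_⟩
  have : Finite (Facet K) := inferInstanceAs (Finite {a : K // IsCoatom a})
  refine Finite.of_surjective
    (fun p : Option (K × Finset (Facet K)) => p.elim ⊤ fun p => mk p.1 p.2) fun x => ?_
  induction x with
  | top => exact ⟨none, rfl⟩
  | mk F S => exact ⟨some (F, S), rfl⟩

theorem nonempty_Iic_orderIso {n : ℤ} {rk : K → ℤ} (hK : IsAbstractPolytope n rk)
    {x : PolytopeExtension K} (hx : rank rk x = n) : Nonempty (Set.Iic x ≃o K) := by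
  induction x with
  | top => exact absurd (hK.rank_top ▸ hx) (lt_add_one n).ne'
  | mk F S =>
    obtain rfl := isTop_iff_eq_top.1 (hK.rank_eq_iff_isTop.1 hx)
    exact ⟨(facetIso S).symm⟩

/-- The action of `Γ(K)` on `K̄` that permutes the coordinates of `C₂^A`. -/
noncomputable def lift : (K ≃o K) →* (PolytopeExtension K ≃o PolytopeExtension K) where
  toFun g := affine g ∅
  map_one' := affine_one_empty
  map_mul' g h := by simp [affine_mul_affine]

theorem lift_injective : Function.Injective (lift (K := K)) := fun g h hgh =>
  congrArg Prod.fst (affine_injective (a₁ := (g, ∅)) (a₂ := (h, ∅)) hgh)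

/-- The translation of `C₂^A` by the basis vector of the facet `a`. -/
noncomputable def toggle (a : Facet K) : PolytopeExtension K ≃o PolytopeExtension K :=
  affine 1 {a}

theorem lift_smul_liftFlag_empty : lift g • liftFlag ∅ c = liftFlag ∅ (g • c) :=
  affine_smul_liftFlag_empty g ∅ c

theorem toggle_smul_liftFlag : toggle a • liftFlag U c = liftFlag (symmDiff U {a}) c := by
  rw [toggle, affine_smul_liftFlag, one_smul, one_smul]

theorem orderOf_lift_mul_toggle {g : K ≃o K} {a : Facet K} (hg : g * g = 1) (ha : g • a ≠ a) :
    orderOf (lift g * toggle a) = 4 := by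
  have hmul : lift g * toggle a = affine g {g • a} := by
    simp [lift, toggle, affine_mul_affine, ← Finset.bot_eq_empty]
  have hsq : (lift g * toggle a) ^ 2 = affine 1 (symmDiff {a} {g • a}) := by
    rw [hmul, sq, affine_mul_affine, hg, Finset.smul_finset_singleton, ← mul_smul, hg, one_smul]
  refine orderOf_eq_prime_pow (p := 2) (n := 1) ?_ ?_
  · rw [pow_one, hsq, ← affine_one_empty]
    intro h
    have hsupp := congrArg Prod.snd (affine_injective (a₁ := (1, _)) (a₂ := (1, _)) h)
    exact ha (Finset.singleton_injective (symmDiff_eq_bot.1 hsupp)).symm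
  · rw [pow_succ, pow_one, pow_mul, hsq, sq, affine_mul_affine]
    simp [affine_one_empty]

end Automorphisms

section Generators

open scoped Pointwise

variable {K : Type*} [PartialOrder K] [OrderTop K] {m : ℕ}

/-- Distinguished generators of `Γ(K̄)`: those of `Γ(K)`, followed by the toggle of the base
facet. -/
noncomputable def generators (ρ : Fin m → (K ≃o K)) (a : Facet K) :
    Fin (m + 1) → (PolytopeExtension K ≃o PolytopeExtension K) :=
  Fin.snoc (fun j => lift (ρ j)) (toggle a)

variable (ρ : Fin m → (K ≃o K)) (a : Facet K)

@[simp]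
theorem generators_castSucc (j : Fin m) : generators ρ a j.castSucc = lift (ρ j) :=
  Fin.snoc_castSucc ..

@[simp]
theorem generators_last : generators ρ a (Fin.last m) = toggle a :=
  Fin.snoc_last ..

theorem orderOf_generators_castSucc_mul (i j : Fin m) :
    orderOf (generators ρ a i.castSucc * generators ρ a j.castSucc) = orderOf (ρ i * ρ j) := by
  rw [generators_castSucc, generators_castSucc, ← map_mul, orderOf_injective _ lift_injective]

variable {ρ a}

theorem orderOf_generators_mul_last {n : ℤ} {rk : K → ℤ} (hK : IsAbstractPolytope n rk)
    {c : Flag K} (ha : a.1 ∈ c) {j : Fin m} (hj : IsPolytopeAdj rk (rk a.1) c (ρ j • c)) :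
    orderOf (generators ρ a j.castSucc * generators ρ a (Fin.last m)) = 4 := by
  rw [generators_castSucc, generators_last]
  exact orderOf_lift_mul_toggle (hK.mul_self_eq_one_of_adj_smul hj) fun h =>
    hK.apply_ne_of_adj_smul ha hj (congrArg Subtype.val h)

theorem generators_adj {rk : K → ℤ} (hrk : rk ⊤ = m) {c : Flag K}
    (hρ : ∀ j : Fin m, IsPolytopeAdj rk j c (ρ j • c)) (ha : a.1 ∈ c) (j : Fin (m + 1)) :
    IsPolytopeAdj (rank rk) j (liftFlag ∅ c) (generators ρ a j • liftFlag ∅ c) := by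
  cases j using Fin.lastCases with
  | cast j =>
    rw [generators_castSucc, lift_smul_liftFlag_empty]
    exact liftFlag_adj (hρ j) ∅
  | last =>
    rw [generators_last, toggle_smul_liftFlag]
    simpa [hrk] using liftFlag_toggle_adj rk ha ∅

end Generators

end PolytopeExtension

/-- **Lemma 2K.**  Let `K` be a regular `m`-polytope with distinguished generators
`ρ_0, ..., ρ_{m-1}` (w.r.t. a base flag `Φ`), Schläfli type `{p_1, ..., p_{m-1}}`
(where `p_j = orderOf (ρ_{j-1} ρ_j)`), and facet set `A` (the faces of rank
`m-1`).  Then there is a regular `(m+1)`-polytope `K̄` of Schläfli type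
`{p_1, ..., p_{m-1}, 4}`, whose facets (sections below the faces of rank `m`) are
isomorphic to `K`, with `|Γ(K̄)| = |Γ(K)| · 2^{|A|}` when `K` is finite; moreover
`K̄` is finite if and only if `K` is finite. -/
theorem regular_polytope_extension {m : ℕ} (hm : 1 ≤ m) {K : Type} [PartialOrder K]
    (rkK : K → ℤ) (hK : IsAbstractPolytope (m : ℤ) rkK)
    (hKreg : IsRegularPolytope (P := K))
    (Φ : Flag K) (ρ : Fin m → (K ≃o K))
    (hρ : ∀ j : Fin m, ∃ Ψ : Flag K,
      (↑Ψ : Set K) = (ρ j) '' (↑Φ : Set K) ∧ IsPolytopeAdj rkK (j : ℤ) Φ Ψ) :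
    ∃ Kb : BundledPolytope ((m : ℤ) + 1), IsRegularPolytope (P := Kb.carrier) ∧
      -- the facets of `K̄` are isomorphic to `K`
      (∀ F : Kb.carrier, Kb.rk F = (m : ℤ) → Nonempty (↥(Set.Iic F) ≃o K)) ∧
      -- Schläfli type `{p_1, ..., p_{m-1}, 4}`
      (∃ (Φb : Flag Kb.carrier) (ρb : Fin (m + 1) → (Kb.carrier ≃o Kb.carrier)),
        (∀ j : Fin (m + 1), ∃ Ψ : Flag Kb.carrier,
          (↑Ψ : Set Kb.carrier) = (ρb j) '' (↑Φb : Set Kb.carrier) ∧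
            IsPolytopeAdj Kb.rk (j : ℤ) Φb Ψ) ∧
        (∀ j : ℕ, (h1 : 1 ≤ j) → (h2 : j ≤ m - 1) →
          orderOf (ρb ⟨j - 1, by omega⟩ * ρb ⟨j, by omega⟩)
            = orderOf (ρ ⟨j - 1, by omega⟩ * ρ ⟨j, by omega⟩)) ∧
        orderOf (ρb ⟨m - 1, by omega⟩ * ρb ⟨m, by omega⟩) = 4) ∧
      -- order of the automorphism group when `K` is finite
      (Finite K → Nat.card (Kb.carrier ≃o Kb.carrier)
        = Nat.card (K ≃o K) * 2 ^ Nat.card {F : K // rkK F = (m : ℤ) - 1}) ∧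
      -- `K̄` is finite if and only if `K` is finite
      (Finite Kb.carrier ↔ Finite K) := by
  obtain ⟨t, ht⟩ := hK.exists_top
  let : OrderTop K := { top := t, le_top := ht }
  have hadj (j : Fin m) : IsPolytopeAdj rkK j Φ (ρ j • Φ) := by
    obtain ⟨Ψ, hΨ, h⟩ := hρ j
    rwa [show ρ j • Φ = Ψ from Flag.ext hΨ.symm]
  obtain ⟨a, haΦ, ha⟩ := hK.exists_mem_flag_rank_eq Φ (i := m - 1) ⟨by lia, by lia⟩
  have hfacet : IsCoatom a := hK.isCoatom_iff_rank_eq.2 ha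
  have := hK.wellFoundedGT
  let last : Fin m := ⟨m - 1, by lia⟩
  have hlast : rkK a = (last : ℕ) := by grind
  refine ⟨⟨PolytopeExtension K, PolytopeExtension.rank rkK,
      PolytopeExtension.isAbstractPolytope hK⟩,
    PolytopeExtension.isRegularPolytope hKreg,
    fun _ => PolytopeExtension.nonempty_Iic_orderIso hK,
    ⟨PolytopeExtension.liftFlag ∅ Φ, PolytopeExtension.generators ρ ⟨a, hfacet⟩,
      fun j => ⟨_, rfl, PolytopeExtension.generators_adj hK.rank_top hadj haΦ j⟩,
      fun j _ _ => PolytopeExtension.orderOf_generators_castSucc_mul ρ _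
        ⟨j - 1, by lia⟩ ⟨j, by lia⟩,
      PolytopeExtension.orderOf_generators_mul_last hK haΦ (j := last) (hlast ▸ hadj last)⟩,
    fun _ => PolytopeExtension.card_orderIso hK hKreg, PolytopeExtension.finite_iff⟩
end

section
/- Let m ≥ 1 and let Γ be a string C-group of rank m with distinguished generators ρ_0, ..., ρ_{m-1}, each of order exactly 2. Suppose Γ acts transitively on a nonempty set A, and a ∈ A is a point whose stabilizer in Γ is exactly the subgroup ⟨ρ_0, ..., ρ_{m-2}⟩. Let N be the group of finitely supported functions A → ℤ/2ℤ under pointwise addition, with Γ acting on N by permuting coordinates via its action on A, and let S = N ⋊ Γ be the semidirect product. Let s_i = (0, ρ_i) for 0 ≤ i ≤ m-1 and let s_m = (δ_a, 1), where δ_a is the indicator function of a. Then: (i) S is generated by s_0, ..., s_m, and each s_i has order 2; (ii) S with these m+1 generators is a string C-group of rank m+1; (iii) the subgroup ⟨s_0, ..., s_{m-1}⟩ equals {0} ⋊ Γ and is isomorphic to Γ via a map sending s_i to ρ_i; (iv) for 1 ≤ j ≤ m-1 the order of s_{j-1} s_j equals the order of ρ_{j-1} ρ_j, and s_{m-1}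 s_m has order 4; (v) if Γ and A are finite, then |S| = |Γ| · 2^{|A|}. -/
/-- A string group generated by involutions (sggi): the group is generated by
`g 0, ..., g (n-1)`, each `g i` squares to the identity, and
`(g i * g j)^2 = 1` whenever `|i - j| > 1`. -/
def IsSggi {G : Type*} [Group G] {n : ℕ} (g : Fin n → G) : Prop :=
  Subgroup.closure (Set.range g) = ⊤ ∧ (∀ i, g i ^ 2 = 1) ∧
    ∀ i j : Fin n, 1 < |(i : ℤ) - (j : ℤ)| → (g i * g j) ^ 2 = 1

/-- A string C-group: an sggi whose generators have order exactly `2` and which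
satisfies the intersection condition. -/
def IsStringCGroup {G : Type*} [Group G] {n : ℕ} (g : Fin n → G) : Prop :=
  IsSggi g ∧ (∀ i, orderOf (g i) = 2) ∧
    ∀ I J : Set (Fin n),
      Subgroup.closure (g '' I) ⊓ Subgroup.closure (g '' J)
        = Subgroup.closure (g '' (I ∩ J))

/-- `H` (generated by `h 0, ..., h (k-1)`) covers the sggi `⟨g 0, ..., g (k-1)⟩`:
there is a homomorphism sending each `h t` to `g t` whose range is exactly the
subgroup generated by the `g t`, i.e. an epimorphism of sggi's. -/
def SggiCovers {H G : Type*} [Group H] [Group G] {k : ℕ}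
    (h : Fin k → H) (g : Fin k → G) : Prop :=
  ∃ φ : H →* G, (∀ t, φ (h t) = g t) ∧
    φ.range = Subgroup.closure (Set.range g)

/-- The sggi `⟨h 0, ..., h (k-1)⟩` is isomorphic to the sggi
`⟨g 0, ..., g (k-1)⟩` via a map sending each `h t` to `g t`: there is an
injective homomorphism on the subgroup generated by the `h t` sending each `h t`
to `g t` (its range is then automatically the subgroup generated by the `g t`). -/
def SggiIsoVia {H G : Type*} [Group H] [Group G] {k : ℕ}
    (h : Fin k → H) (g : Fin k → G) : Prop :=
  ∃ φ : ↥(Subgroup.closure (Set.range h)) →* G,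
    Function.Injective φ ∧
    ∀ t, φ ⟨h t, Subgroup.subset_closure (Set.mem_range_self t)⟩ = g t

/-- A group bundled with its carrier. -/
structure BundledGroup where
  carrier : Type
  [grp : Group carrier]

attribute [instance] BundledGroup.grp

/-!
Conjugating `(δ_a, 1)` by `(0, κ)` gives `(δ_{κ • a}, 1)`, so the subgroup of `S` generated by a
set of the `s i` containing `s m` consists of the pairs `(x, γ)` with `γ ∈ K` and `x` supported on
the orbit `K • a`, where `K` is generated by the corresponding `ρ i`; without `s m` only `x = 0`
remains. The intersection condition for `S` thus splits into the one for `Γ` and the equality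
`(K_I • a) ∩ (K_J • a) = K_{I ∩ J} • a` of orbits. For the latter, the `ρ i` below a gap of `I` fix
`a` and commute with those above it, so the orbit depends only on the part of `I` above its last
gap. Such parts are final segments of the index set, so of those of `I` and `J` one contains the
other.
-/

open MulAction SemidirectProduct Multiplicative

namespace IsSggi

variable {G : Type*} [Group G] {n : ℕ} {g : Fin n → G}

lemma commute (hg : IsSggi g) {i j : Fin n} (hij : (i : ℕ) + 1 < j) : Commute (g i) (g j) := by
  have hinv : ∀ k, (g k)⁻¹ = g k := fun k =>
    inv_eq_of_mul_eq_one_left (by rw [← sq, hg.2.1 k])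
  have hsq : (g i * g j) ^ 2 = 1 := hg.2.2 i j (by rw [abs_sub_comm, lt_abs]; left; omega)
  calc g i * g j = (g i * g j)⁻¹ := eq_inv_of_mul_eq_one_left (by rw [← sq, hsq])
    _ = g j * g i := by rw [mul_inv_rev, hinv, hinv]

end IsSggi

lemma IsStringCGroup.mem_closure_image_iff {G : Type*} [Group G] {n : ℕ} {g : Fin n → G}
    (hg : IsStringCGroup g) {i : Fin n} {I : Set (Fin n)} :
    g i ∈ Subgroup.closure (g '' I) ↔ i ∈ I := by
  refine ⟨fun hmem => ?_, fun hi => Subgroup.subset_closure ⟨i, hi, rfl⟩⟩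
  by_contra hi
  have hbot : Subgroup.closure (g '' {i}) ⊓ Subgroup.closure (g '' I) = ⊥ := by
    rw [hg.2.2, Set.singleton_inter_eq_empty.2 hi, Set.image_empty, Subgroup.closure_empty]
  have hone : g i = 1 := by
    rw [← Subgroup.mem_bot, ← hbot]
    exact ⟨Subgroup.subset_closure ⟨i, rfl, rfl⟩, hmem⟩
  simpa [hone] using hg.2.1 i

lemma IsStringCGroup.smul_eq_self_iff {G A : Type*} [Group G] [MulAction G A] {n : ℕ}
    {g : Fin n → G} (hg : IsStringCGroup g) {a : A} {I : Set (Fin n)}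
    (hstab : stabilizer G a = Subgroup.closure (g '' I)) {i : Fin n} :
    g i • a = a ↔ i ∈ I := by
  rw [← mem_stabilizer_iff, hstab, hg.mem_closure_image_iff]

section FinalRun

/-- The elements of `I` above which `I` has no gap: the largest upper set contained in `I`. -/
def finalRun {ι : Type*} [Preorder ι] (I : Set ι) : Set ι :=
  {i | Set.Ici i ⊆ I}

lemma finalRun_subset {ι : Type*} [Preorder ι] (I : Set ι) : finalRun I ⊆ I :=
  fun _ hi => hi Set.self_mem_Ici

lemma isUpperSet_finalRun {ι : Type*} [Preorder ι] (I : Set ι) : IsUpperSet (finalRun I) :=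
  fun _ _ hij hi => (Set.Ici_subset_Ici.2 hij).trans hi

lemma exists_gt_forall_finalRun_gt {ι : Type*} [LinearOrder ι] {I : Set ι} {i : ι}
    (hi : i ∈ I) (hrun : i ∉ finalRun I) : ∃ j > i, ∀ k ∈ finalRun I, j < k := by
  obtain ⟨j, hij, hj⟩ := Set.not_subset.1 hrun
  exact ⟨j, lt_of_le_of_ne hij (by rintro rfl; exact hj hi),
    fun k hk => lt_of_not_ge fun hkj => hj (hk hkj)⟩

end FinalRun

section Orbits

open scoped Pointwise

variable {G A : Type*} [Group G] [MulAction G A] {a : A}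

lemma orbit_closure_mono {X Y : Set G} (h : X ⊆ Y) :
    orbit (Subgroup.closure X) a ⊆ orbit (Subgroup.closure Y) a := by
  rintro _ ⟨⟨κ, hκ⟩, rfl⟩
  exact ⟨⟨κ, Subgroup.closure_mono h hκ⟩, rfl⟩

lemma orbit_closure_eq_of_commute {X Y : Set G} (hYX : Y ⊆ X)
    (hX : ∀ x ∈ X, x ∈ Y ∨ x • a = a ∧ ∀ y ∈ Y, Commute x y) :
    orbit (Subgroup.closure X) a = orbit (Subgroup.closure Y) a := by
  set O : Set A := orbit (Subgroup.closure Y) a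
  have hstable : Subgroup.closure X ≤ stabilizer G O := by
    rw [Subgroup.closure_le]
    intro x hx
    rcases hX x hx with hxY | ⟨hxa, hxY⟩
    · exact smul_orbit (⟨x, Subgroup.subset_closure hxY⟩ : Subgroup.closure Y) a
    · have hcentral : Subgroup.closure Y ≤ Subgroup.centralizer {x} := by
        rw [Subgroup.closure_le]
        exact fun y hy => Subgroup.mem_centralizer_singleton_iff.2 (hxY y hy).symm
      have hid : ∀ F ∈ O, x • F = F := by
        rintro _ ⟨⟨κ, hκ⟩, rfl⟩
        have hcomm : κ * x = x * κ := Subgroup.mem_centralizer_singleton_iff.1 (hcentral hκ)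
        change x • κ • a = κ • a
        rw [smul_smul, ← hcomm, mul_smul, hxa]
      exact (Set.image_congr hid).trans (Set.image_id' O)
  refine subset_antisymm ?_ (orbit_closure_mono hYX)
  rintro _ ⟨⟨κ, hκ⟩, rfl⟩
  rw [← mem_stabilizer_iff.1 (hstable hκ)]
  exact Set.smul_mem_smul_set (mem_orbit_self a)

variable {n : ℕ} {g : Fin n → G}

lemma IsSggi.orbit_closure_finalRun (hg : IsSggi g)
    (hfix : ∀ i : Fin n, (i : ℕ) + 1 < n → g i • a = a) (I : Set (Fin n)) :
    orbit (Subgroup.closure (g '' I)) a = orbit (Subgroup.closure (g '' finalRun I)) a := by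
  refine orbit_closure_eq_of_commute (Set.image_mono (finalRun_subset I)) ?_
  rintro _ ⟨i, hi, rfl⟩
  by_cases hrun : i ∈ finalRun I
  · exact Or.inl ⟨i, hrun, rfl⟩
  · obtain ⟨j, hij, hj⟩ := exists_gt_forall_finalRun_gt hi hrun
    refine Or.inr ⟨hfix i (by omega), ?_⟩
    rintro _ ⟨k, hk, rfl⟩
    exact hg.commute (by have := hj k hk; omega)

lemma IsSggi.orbit_closure_inter (hg : IsSggi g)
    (hfix : ∀ i : Fin n, (i : ℕ) + 1 < n → g i • a = a) (I J : Set (Fin n)) :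
    orbit (Subgroup.closure (g '' (I ∩ J))) a
      = orbit (Subgroup.closure (g '' I)) a ∩ orbit (Subgroup.closure (g '' J)) a := by
  refine subset_antisymm (Set.subset_inter
    (orbit_closure_mono (Set.image_mono Set.inter_subset_left))
    (orbit_closure_mono (Set.image_mono Set.inter_subset_right))) ?_
  rcases (isUpperSet_finalRun I).total (isUpperSet_finalRun J) with hIJ | hJI
  · refine Set.inter_subset_left.trans ?_
    rw [hg.orbit_closure_finalRun hfix I]
    exact orbit_closure_mono (Set.image_mono
      (Set.subset_inter (finalRun_subset I) (hIJ.trans (finalRun_subset J))))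
  · refine Set.inter_subset_right.trans ?_
    rw [hg.orbit_closure_finalRun hfix J]
    exact orbit_closure_mono (Set.image_mono
      (Set.subset_inter (hJI.trans (finalRun_subset I)) (finalRun_subset J)))

end Orbits

section Wreath

variable {G A M : Type*} [Group G] [MulAction G A] [AddCommGroup M]
  {φ : G →* MulAut (Multiplicative (A →₀ M))}

/-- `G` acts through `φ` on the finitely supported functions `A → M` (written multiplicatively) by
`(γ · x)(F) = x(γ⁻¹ • F)`. -/
def PermutesCoordinates (φ : G →* MulAut (Multiplicative (A →₀ M))) : Prop :=
  ∀ (γ : G) (x : A →₀ M) (F : A), toAdd (φ γ (ofAdd x)) F = x (γ⁻¹ • F)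

namespace PermutesCoordinates

lemma apply_ofAdd_single (hφ : PermutesCoordinates φ) (γ : G) (a : A) (c : M) :
    φ γ (ofAdd (Finsupp.single a c)) = ofAdd (Finsupp.single (γ • a) c) := by
  classical
  apply toAdd.injective
  ext F
  rw [hφ, toAdd_ofAdd]
  simp only [Finsupp.single_apply, eq_inv_smul_iff]

/-- The subgroup of the semidirect product formed by the pairs `(x, γ)` with `γ ∈ K` and `x`
supported on the union of the `K`-orbits of the points of `C`. -/
def orbitSubgroup (hφ : PermutesCoordinates φ) (K : Subgroup G) (C : Set A) :
    Subgroup (Multiplicative (A →₀ M) ⋊[φ] G) where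
  carrier := {p | p.right ∈ K ∧ ∀ F, toAdd p.left F ≠ 0 → ∃ b ∈ C, F ∈ orbit K b}
  one_mem' := ⟨one_mem K, fun _ hF => absurd rfl hF⟩
  mul_mem' := by
    rintro p q ⟨hpK, hp⟩ ⟨hqK, hq⟩
    refine ⟨mul_mem hpK hqK, fun F hF => ?_⟩
    have hsum : toAdd (p * q).left F = toAdd p.left F + toAdd q.left (p.right⁻¹ • F) := by
      rw [mul_left, toAdd_mul, Finsupp.add_apply, ← hφ, ofAdd_toAdd]
    by_cases hpF : toAdd p.left F = 0
    · obtain ⟨b, hb, hFb⟩ := hq (p.right⁻¹ • F) (by rwa [hsum, hpF, zero_add] at hF)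
      refine ⟨b, hb, ?_⟩
      simpa [Subgroup.smul_def] using mem_orbit_of_mem_orbit (⟨p.right, hpK⟩ : K) hFb
    · exact hp F hpF
  inv_mem' := by
    rintro p ⟨hpK, hp⟩
    refine ⟨inv_mem hpK, fun F hF => ?_⟩
    have hneg : toAdd (p⁻¹).left F = -toAdd p.left (p.right • F) := by
      rw [inv_left, ← ofAdd_toAdd (p.left⁻¹), hφ, inv_inv, toAdd_inv, Finsupp.neg_apply]
    obtain ⟨b, hb, hFb⟩ := hp (p.right • F) (by rwa [hneg, neg_ne_zero] at hF)
    refine ⟨b, hb, ?_⟩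
    simpa [Subgroup.smul_def] using mem_orbit_of_mem_orbit (⟨p.right⁻¹, inv_mem hpK⟩ : K) hFb

lemma mem_orbitSubgroup {hφ : PermutesCoordinates φ} {K : Subgroup G} {C : Set A}
    {p : Multiplicative (A →₀ M) ⋊[φ] G} :
    p ∈ hφ.orbitSubgroup K C ↔
      p.right ∈ K ∧ ∀ F, toAdd p.left F ≠ 0 → ∃ b ∈ C, F ∈ orbit K b :=
  Iff.rfl

lemma orbitSubgroup_le (hφ : PermutesCoordinates φ) {c : M} (hc : AddSubgroup.zmultiples c = ⊤)
    {K : Subgroup G} {C : Set A} {H : Subgroup (Multiplicative (A →₀ M) ⋊[φ] G)}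
    (hK : ∀ κ ∈ K, inr κ ∈ H) (hC : ∀ b ∈ C, inl (ofAdd (Finsupp.single b c)) ∈ H) :
    hφ.orbitSubgroup K C ≤ H := by
  let L : AddSubgroup (A →₀ M) := Subgroup.toAddSubgroup' (H.comap inl)
  have hsingle : ∀ b ∈ C, ∀ F ∈ orbit K b, Finsupp.single F c ∈ L := by
    rintro b hb _ ⟨⟨κ, hκ⟩, rfl⟩
    change inl (ofAdd (Finsupp.single (κ • b) c)) ∈ H
    rw [← hφ.apply_ofAdd_single, inl_aut]
    exact mul_mem (mul_mem (hK κ hκ) (hC b hb)) (hK _ (inv_mem hκ))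
  rintro p ⟨hpK, hp⟩
  have hleft : toAdd p.left ∈ L := by
    rw [← Finsupp.sum_single (toAdd p.left)]
    refine sum_mem fun F hF => ?_
    obtain ⟨b, hb, hFb⟩ := hp F (Finsupp.mem_support_iff.1 hF)
    obtain ⟨k, hk⟩ : toAdd p.left F ∈ AddSubgroup.zmultiples c := hc ▸ AddSubgroup.mem_top _
    simp only [← hk, ← Finsupp.smul_single]
    exact zsmul_mem (hsingle b hb F hFb) k
  rw [← inl_left_mul_inr_right p]
  exact mul_mem hleft (hK _ hpK)

lemma closure_inl_union_inr (hφ : PermutesCoordinates φ) {c : M}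
    (hc : AddSubgroup.zmultiples c = ⊤) (C : Set A) (X : Set G) :
    Subgroup.closure ((fun b => inl (ofAdd (Finsupp.single b c))) '' C ∪ inr '' X)
      = hφ.orbitSubgroup (Subgroup.closure X) C := by
  apply le_antisymm
  · rw [Subgroup.closure_le]
    rintro _ (⟨b, hb, rfl⟩ | ⟨x, hx, rfl⟩)
    · refine ⟨one_mem _, fun F hF => ⟨b, hb, ?_⟩⟩
      have hFb : F = b := by
        by_contra hne
        exact hF (Finsupp.single_eq_of_ne hne)
      rw [hFb]
      exact mem_orbit_self b
    · exact ⟨Subgroup.subset_closure hx, fun F hF => absurd rfl hF⟩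
  · refine hφ.orbitSubgroup_le hc (fun κ hκ => ?_)
      fun b hb => Subgroup.subset_closure (Or.inl ⟨b, hb, rfl⟩)
    have hmap : (Subgroup.closure X).map (inr : G →* Multiplicative (A →₀ M) ⋊[φ] G) ≤
        Subgroup.closure ((fun b => inl (ofAdd (Finsupp.single b c))) '' C ∪ inr '' X) := by
      rw [MonoidHom.map_closure]
      exact Subgroup.closure_mono Set.subset_union_right
    exact hmap ⟨κ, hκ, rfl⟩

lemma commute_inr_inl_single (hφ : PermutesCoordinates φ) {γ : G} {a : A} (hγ : γ • a = a)
    (c : M) :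
    Commute (inr γ : Multiplicative (A →₀ M) ⋊[φ] G) (inl (ofAdd (Finsupp.single a c))) := by
  rw [Commute, SemiconjBy, ← mul_inv_eq_iff_eq_mul, ← map_inv, ← inl_aut,
    hφ.apply_ofAdd_single, hγ]

lemma sq_inr_mul_inl_single (hφ : PermutesCoordinates φ) {γ : G} (hγ : γ ^ 2 = 1) (a : A) (c : M) :
    (inr γ * inl (ofAdd (Finsupp.single a c)) : Multiplicative (A →₀ M) ⋊[φ] G) ^ 2
      = inl (ofAdd (Finsupp.single (γ • a) c + Finsupp.single a c)) := by
  have hinv : γ⁻¹ = γ := inv_eq_of_mul_eq_one_left (by rw [← sq, hγ])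
  have hconj := inl_aut (φ := φ) γ (ofAdd (Finsupp.single a c))
  rw [hφ.apply_ofAdd_single, hinv] at hconj
  rw [ofAdd_add, map_mul, hconj, sq, ← mul_assoc]

end PermutesCoordinates

lemma addOrderOf_single_add_single {a b : A} (hab : a ≠ b) (c : M) :
    addOrderOf (Finsupp.single a c + Finsupp.single b c) = addOrderOf c := by
  refine addOrderOf_eq_addOrderOf_iff.2 fun n => ⟨fun h => ?_, fun h => ?_⟩
  · simpa [hab] using DFunLike.congr_fun h a
  · rw [smul_add, Finsupp.smul_single, Finsupp.smul_single, h, Finsupp.single_zero,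
      Finsupp.single_zero, add_zero]

lemma PermutesCoordinates.orderOf_inr_mul_inl_single (hφ : PermutesCoordinates φ) {γ : G} {a : A}
    (hγ : γ ^ 2 = 1) (ha : γ • a ≠ a) (c : M) :
    orderOf (inr γ * inl (ofAdd (Finsupp.single a c)) : Multiplicative (A →₀ M) ⋊[φ] G)
      = 2 * addOrderOf c := by
  set p : Multiplicative (A →₀ M) ⋊[φ] G := inr γ * inl (ofAdd (Finsupp.single a c)) with hp
  have hdvd : 2 ∣ orderOf p := by
    have hright : rightHom p = γ := by simp [hp]
    have hγ_ne : γ ≠ 1 := by rintro rfl; exact ha (one_smul G a)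
    rw [← orderOf_eq_prime hγ hγ_ne, ← hright]
    exact orderOf_map_dvd _ _
  have hsq : orderOf (p ^ 2) = addOrderOf c := by
    rw [hφ.sq_inr_mul_inl_single hγ, orderOf_injective _ inl_injective,
      orderOf_ofAdd_eq_addOrderOf, addOrderOf_single_add_single ha]
  rw [← hsq, orderOf_pow_of_dvd two_ne_zero hdvd, Nat.mul_div_cancel' hdvd]

end Wreath

section WreathGenerators

variable {G A M : Type*} [Group G] [AddCommGroup M]
  (φ : G →* MulAut (Multiplicative (A →₀ M))) {m : ℕ} (ρ : Fin m → G) (a : A) (c : M)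

/-- The generators `s i = (0, ρ i)` for `i < m` and `s m = (c δ_a, 1)` of the wreath extension. -/
noncomputable def wreathGenerators : Fin (m + 1) → Multiplicative (A →₀ M) ⋊[φ] G :=
  Fin.snoc (fun i => inr (ρ i)) (inl (ofAdd (Finsupp.single a c)))

@[simp]
lemma wreathGenerators_castSucc (i : Fin m) : wreathGenerators φ ρ a c i.castSucc = inr (ρ i) :=
  Fin.snoc_castSucc ..

@[simp]
lemma wreathGenerators_last :
    wreathGenerators φ ρ a c (Fin.last m) = inl (ofAdd (Finsupp.single a c)) :=
  Fin.snoc_last ..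

variable {φ a c}

lemma eq_wreathGenerators {s : Fin (m + 1) → Multiplicative (A →₀ M) ⋊[φ] G}
    (hs : ∀ (i : Fin (m + 1)) (h : (i : ℕ) < m), s i = inr (ρ ⟨i, h⟩))
    (hlast : s (Fin.last m) = inl (ofAdd (Finsupp.single a c))) :
    s = wreathGenerators φ ρ a c := by
  funext i
  induction i using Fin.lastCases with
  | last => rw [hlast, wreathGenerators_last]
  | cast i => rw [wreathGenerators_castSucc, hs _ i.2]; rfl

variable {ρ}

lemma closure_range_wreathGenerators_castSucc (hρ : Subgroup.closure (Set.range ρ) = ⊤) :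
    Subgroup.closure (Set.range fun i : Fin m => wreathGenerators φ ρ a c i.castSucc)
      = (inr : G →* Multiplicative (A →₀ M) ⋊[φ] G).range := by
  simp only [wreathGenerators_castSucc]
  rw [← Function.comp_def, Set.range_comp, ← MonoidHom.map_closure, hρ, MonoidHom.range_eq_map]

lemma orderOf_wreathGenerators_castSucc_mul_castSucc (i j : Fin m) :
    orderOf (wreathGenerators φ ρ a c i.castSucc * wreathGenerators φ ρ a c j.castSucc)
      = orderOf (ρ i * ρ j) := by
  rw [wreathGenerators_castSucc, wreathGenerators_castSucc, ← map_mul,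
    orderOf_injective _ inr_injective]

lemma orderOf_wreathGenerators {k : ℕ} (hρ : ∀ i, orderOf (ρ i) = k) (hc : addOrderOf c = k)
    (i : Fin (m + 1)) : orderOf (wreathGenerators φ ρ a c i) = k := by
  induction i using Fin.lastCases with
  | last =>
    rw [wreathGenerators_last, orderOf_injective _ inl_injective, orderOf_ofAdd_eq_addOrderOf, ← hc]
    exact addOrderOf_injective (Finsupp.singleAddHom a) (Finsupp.single_injective a) c
  | cast i => rw [wreathGenerators_castSucc, orderOf_injective _ inr_injective, hρ]

lemma wreathGenerators_pow {k : ℕ} (hρ : ∀ i, ρ i ^ k = 1) (hc : k • c = 0) (i : Fin (m + 1)) :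
    wreathGenerators φ ρ a c i ^ k = 1 := by
  induction i using Fin.lastCases with
  | last =>
    rw [wreathGenerators_last, ← map_pow, ← ofAdd_nsmul, Finsupp.smul_single, hc,
      Finsupp.single_zero, ofAdd_zero, map_one]
  | cast i => rw [wreathGenerators_castSucc, ← map_pow, hρ, map_one]

lemma image_wreathGenerators (I : Set (Fin (m + 1))) :
    wreathGenerators φ ρ a c '' I
      = (fun b => inl (ofAdd (Finsupp.single b c))) '' {b | b = a ∧ Fin.last m ∈ I}
        ∪ inr '' (ρ '' (Fin.castSucc ⁻¹' I)) := by
  ext p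
  constructor
  · rintro ⟨i, hi, rfl⟩
    induction i using Fin.lastCases with
    | last => exact Or.inl ⟨a, ⟨rfl, hi⟩, (wreathGenerators_last φ ρ a c).symm⟩
    | cast i => exact Or.inr ⟨ρ i, ⟨i, hi, rfl⟩, (wreathGenerators_castSucc φ ρ a c i).symm⟩
  · rintro (⟨b, ⟨rfl, hI⟩, rfl⟩ | ⟨_, ⟨i, hi, rfl⟩, rfl⟩)
    · exact ⟨_, hI, wreathGenerators_last φ ρ b c⟩
    · exact ⟨i.castSucc, hi, wreathGenerators_castSucc φ ρ a c i⟩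

variable [MulAction G A]

lemma orderOf_wreathGenerators_castSucc_mul_last (hφ : PermutesCoordinates φ) {i : Fin m}
    (hsq : ρ i ^ 2 = 1) (ha : ρ i • a ≠ a) :
    orderOf (wreathGenerators φ ρ a c i.castSucc * wreathGenerators φ ρ a c (Fin.last m))
      = 2 * addOrderOf c := by
  rw [wreathGenerators_castSucc, wreathGenerators_last, hφ.orderOf_inr_mul_inl_single hsq ha]

lemma commute_wreathGenerators_last (hφ : PermutesCoordinates φ) {i : Fin m}
    (hi : ρ i • a = a) :
    Commute (wreathGenerators φ ρ a c i.castSucc) (wreathGenerators φ ρ a c (Fin.last m)) := by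
  rw [wreathGenerators_castSucc, wreathGenerators_last]
  exact hφ.commute_inr_inl_single hi c

lemma mem_closure_image_wreathGenerators (hφ : PermutesCoordinates φ)
    (hc : AddSubgroup.zmultiples c = ⊤) {I : Set (Fin (m + 1))}
    {p : Multiplicative (A →₀ M) ⋊[φ] G} :
    p ∈ Subgroup.closure (wreathGenerators φ ρ a c '' I) ↔
      p.right ∈ Subgroup.closure (ρ '' (Fin.castSucc ⁻¹' I)) ∧
        ∀ F, toAdd p.left F ≠ 0 →
          Fin.last m ∈ I ∧ F ∈ orbit (Subgroup.closure (ρ '' (Fin.castSucc ⁻¹' I))) a := by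
  rw [image_wreathGenerators, hφ.closure_inl_union_inr hc,
    PermutesCoordinates.mem_orbitSubgroup]
  simp only [Set.mem_ofPred_eq, and_assoc, exists_eq_left]

lemma closure_range_wreathGenerators [IsPretransitive G A] (hφ : PermutesCoordinates φ)
    (hc : AddSubgroup.zmultiples c = ⊤) (hρ : Subgroup.closure (Set.range ρ) = ⊤) :
    Subgroup.closure (Set.range (wreathGenerators φ ρ a c)) = ⊤ := by
  rw [← Set.image_univ, Subgroup.eq_top_iff']
  intro p
  rw [mem_closure_image_wreathGenerators hφ hc, Set.preimage_univ, Set.image_univ, hρ]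
  refine ⟨Subgroup.mem_top _, fun F _ => ⟨Set.mem_univ _, ?_⟩⟩
  obtain ⟨γ, hγ⟩ := exists_smul_eq G a F
  exact ⟨⟨γ, Subgroup.mem_top γ⟩, hγ⟩

lemma closure_image_wreathGenerators_inter (hφ : PermutesCoordinates φ)
    (hc : AddSubgroup.zmultiples c = ⊤) (hρ : IsStringCGroup ρ)
    (hfix : ∀ i : Fin m, (i : ℕ) + 1 < m → ρ i • a = a) (I J : Set (Fin (m + 1))) :
    Subgroup.closure (wreathGenerators φ ρ a c '' I)
        ⊓ Subgroup.closure (wreathGenerators φ ρ a c '' J)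
      = Subgroup.closure (wreathGenerators φ ρ a c '' (I ∩ J)) := by
  ext p
  rw [Subgroup.mem_inf]
  simp only [mem_closure_image_wreathGenerators hφ hc]
  rw [Set.preimage_inter, hρ.1.orbit_closure_inter hfix, ← hρ.2.2, Subgroup.mem_inf]
  grind

lemma wreathGenerators_mul_sq (hφ : PermutesCoordinates φ) (hc : 2 • c = 0) (hρ : IsSggi ρ)
    (hfix : ∀ i : Fin m, (i : ℕ) + 1 < m → ρ i • a = a) {i j : Fin (m + 1)}
    (hij : 1 < |(i : ℤ) - (j : ℤ)|) :
    (wreathGenerators φ ρ a c i * wreathGenerators φ ρ a c j) ^ 2 = 1 := by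
  have hsq := wreathGenerators_pow (φ := φ) (a := a) hρ.2.1 hc
  induction i using Fin.lastCases with
  | last =>
    induction j using Fin.lastCases with
    | last => simp at hij
    | cast j =>
      rw [Fin.val_last, Fin.val_castSucc, lt_abs] at hij
      have hcomm := commute_wreathGenerators_last (c := c) hφ (hfix j (by omega))
      rw [hcomm.symm.mul_pow, hsq, hsq, one_mul]
  | cast i =>
    induction j using Fin.lastCases with
    | last =>
      rw [Fin.val_last, Fin.val_castSucc, lt_abs] at hij
      have hcomm := commute_wreathGenerators_last (c := c) hφ (hfix i (by omega))
      rw [hcomm.mul_pow, hsq, hsq, one_mul]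
    | cast j =>
      rw [wreathGenerators_castSucc, wreathGenerators_castSucc, ← map_mul, ← map_pow,
        hρ.2.2 i j hij, map_one]

lemma IsStringCGroup.wreathGenerators [IsPretransitive G A] (hφ : PermutesCoordinates φ)
    (hc : AddSubgroup.zmultiples c = ⊤) (hc_order : addOrderOf c = 2) (hρ : IsStringCGroup ρ)
    (hfix : ∀ i : Fin m, (i : ℕ) + 1 < m → ρ i • a = a) :
    IsStringCGroup (wreathGenerators φ ρ a c) := by
  have hc_two : 2 • c = 0 := hc_order ▸ addOrderOf_nsmul_eq_zero c
  have hsggi : IsSggi (_root_.wreathGenerators φ ρ a c) :=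
    ⟨closure_range_wreathGenerators hφ hc hρ.1.1, wreathGenerators_pow hρ.1.2.1 hc_two,
      fun _ _ => wreathGenerators_mul_sq hφ hc_two hρ.1 hfix⟩
  exact ⟨hsggi, orderOf_wreathGenerators hρ.2.1 hc_order,
    closure_image_wreathGenerators_inter hφ hc hρ hfix⟩

end WreathGenerators

lemma card_multiplicative_finsupp (A M : Type*) [Finite A] [Zero M] :
    Nat.card (Multiplicative (A →₀ M)) = Nat.card M ^ Nat.card A := by
  rw [Nat.card_congr (toAdd.trans Finsupp.equivFunOnFinite), Nat.card_fun]

theorem wreath_extension_is_stringCGroup_general {m : ℕ} {Γ : Type*} [Group Γ]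
    {ρ : Fin m → Γ} (hΓ : IsStringCGroup ρ)
    {A : Type*} [MulAction Γ A] [IsPretransitive Γ A] {a : A}
    (ha : ∀ i : Fin m, ρ i • a = a ↔ (i : ℕ) + 1 < m)
    {φ : Γ →* MulAut (Multiplicative (A →₀ ZMod 2))} (hφ : PermutesCoordinates φ)
    {s : Fin (m + 1) → Multiplicative (A →₀ ZMod 2) ⋊[φ] Γ} (hs : s = wreathGenerators φ ρ a 1) :
    (Subgroup.closure (Set.range s) = ⊤ ∧ ∀ i, orderOf (s i) = 2) ∧
    IsStringCGroup s ∧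
    (Subgroup.closure (Set.range fun i : Fin m => s i.castSucc)
        = (inr : Γ →* Multiplicative (A →₀ ZMod 2) ⋊[φ] Γ).range ∧
      ∃ ψ : Γ →* Multiplicative (A →₀ ZMod 2) ⋊[φ] Γ,
        Function.Injective ψ ∧ ∀ i : Fin m, ψ (ρ i) = s i.castSucc) ∧
    ((∀ i j : Fin m, orderOf (s i.castSucc * s j.castSucc) = orderOf (ρ i * ρ j)) ∧
      ∀ i : Fin m, (i : ℕ) + 1 = m → orderOf (s i.castSucc * s (Fin.last m)) = 4) ∧
    (Finite Γ → Finite A →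
      Nat.card (Multiplicative (A →₀ ZMod 2) ⋊[φ] Γ) = Nat.card Γ * 2 ^ Nat.card A) := by
  subst hs
  have hc : AddSubgroup.zmultiples (1 : ZMod 2) = ⊤ :=
    (AddSubgroup.eq_top_iff' _).2 fun x => ⟨x.val, by simp⟩
  have hc_order : addOrderOf (1 : ZMod 2) = 2 := ZMod.addOrderOf_one 2
  have hS := hΓ.wreathGenerators hφ hc hc_order fun i => (ha i).2
  refine ⟨⟨hS.1.1, hS.2.1⟩, hS, ⟨closure_range_wreathGenerators_castSucc hΓ.1.1, inr,
    inr_injective, fun i => (wreathGenerators_castSucc φ ρ a 1 i).symm⟩,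
    ⟨orderOf_wreathGenerators_castSucc_mul_castSucc, fun i hi => ?_⟩, fun _ _ => ?_⟩
  · have hmove : ρ i • a ≠ a := fun h => ((ha i).1 h).ne hi
    rw [orderOf_wreathGenerators_castSucc_mul_last hφ (hΓ.1.2.1 i) hmove, hc_order]
  · rw [SemidirectProduct.card, card_multiplicative_finsupp, Nat.card_zmod, mul_comm]

/-- **The wreath-product construction of Lemma 2K, group-theoretically.**  Let
`Γ = ⟨ρ 0, ..., ρ (m-1)⟩` be a string C-group of rank `m ≥ 1` acting transitively
on a nonempty set `A`, with the stabilizer of `a ∈ A` equal to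
`⟨ρ 0, ..., ρ (m-2)⟩`.  Let `N` be the group of finitely supported functions
`A → ℤ/2ℤ`, with `Γ` acting by permuting coordinates (`(γ · x)(F) = x(γ⁻¹ · F)`,
hypothesis `hφ`), and let `S = N ⋊ Γ`.  Let `s i = (0, ρ i)` for `i < m` and
`s m = (δ_a, 1)`.  Then (i) `S` is generated by the `s i`, each of order `2`;
(ii) `S` with these `m+1` generators is a string C-group of rank `m+1`;
(iii) `⟨s 0, ..., s (m-1)⟩` equals `{0} ⋊ Γ` and is isomorphic to `Γ` via
`ρ i ↦ s i`; (iv) `orderOf (s (j-1) * s j) = orderOf (ρ (j-1) * ρ j)` for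
`1 ≤ j ≤ m-1`, and `s (m-1) * s m` has order `4`; (v) if `Γ` and `A` are finite
then `|S| = |Γ| · 2^{|A|}`. -/
theorem wreath_extension_is_stringCGroup {m : ℕ} (hm : 1 ≤ m) {Γ : Type} [Group Γ]
    (ρ : Fin m → Γ) (hΓ : IsStringCGroup ρ)
    {A : Type} [Nonempty A] [MulAction Γ A]
    (htrans : ∀ x y : A, ∃ γ : Γ, γ • x = y)
    (a : A)
    (hstab : MulAction.stabilizer Γ a
      = Subgroup.closure {x : Γ | ∃ i : Fin m, (i : ℤ) ≤ (m : ℤ) - 2 ∧ ρ i = x})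
    (φ : Γ →* MulAut (Multiplicative (A →₀ ZMod 2)))
    (hφ : ∀ (γ : Γ) (x : A →₀ ZMod 2) (F : A),
      Multiplicative.toAdd (φ γ (Multiplicative.ofAdd x)) F = x (γ⁻¹ • F)) :
    ∀ s : Fin (m + 1) → Multiplicative (A →₀ ZMod 2) ⋊[φ] Γ,
      (∀ (i : Fin (m + 1)) (h : (i : ℕ) < m),
        s i = SemidirectProduct.inr (ρ ⟨i, h⟩)) →
      s (Fin.last m)
          = SemidirectProduct.inl (Multiplicative.ofAdd (Finsupp.single a 1)) →
      -- (i) `S` is generated by `s 0, ..., s m`, each of order `2`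
      (Subgroup.closure (Set.range s) = ⊤ ∧ ∀ i, orderOf (s i) = 2) ∧
      -- (ii) `S` with these generators is a string C-group of rank `m+1`
      IsStringCGroup s ∧
      -- (iii) `⟨s 0, ..., s (m-1)⟩ = {0} ⋊ Γ ≅ Γ` via `ρ i ↦ s i`
      (Subgroup.closure (Set.range fun i : Fin m => s i.castSucc)
          = (SemidirectProduct.inr :
              Γ →* Multiplicative (A →₀ ZMod 2) ⋊[φ] Γ).range ∧
        ∃ ψ : Γ →* Multiplicative (A →₀ ZMod 2) ⋊[φ] Γ,
          Function.Injective ψ ∧ ∀ i : Fin m, ψ (ρ i) = s i.castSucc) ∧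
      -- (iv) the Schläfli type is `{p_1, ..., p_{m-1}, 4}`
      ((∀ j : ℕ, (h1 : 1 ≤ j) → (h2 : j ≤ m - 1) →
          orderOf (s ⟨j - 1, by omega⟩ * s ⟨j, by omega⟩)
            = orderOf (ρ ⟨j - 1, by omega⟩ * ρ ⟨j, by omega⟩)) ∧
        orderOf (s ⟨m - 1, by omega⟩ * s ⟨m, by omega⟩) = 4) ∧
      -- (v) if `Γ` and `A` are finite then `|S| = |Γ| · 2^{|A|}`
      (Finite Γ → Finite A →
        Nat.card (Multiplicative (A →₀ ZMod 2) ⋊[φ] Γ)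
          = Nat.card Γ * 2 ^ Nat.card A) := by
  intro s hs hlast
  have : IsPretransitive Γ A := ⟨htrans⟩
  have hfix (i : Fin m) : ρ i • a = a ↔ (i : ℕ) + 1 < m := by
    rw [hΓ.smul_eq_self_iff (I := {i | (i : ℤ) ≤ (m : ℤ) - 2}) hstab, Set.mem_ofPred_eq]
    omega
  obtain ⟨hgen, hS, hbase, ⟨hinner, houter⟩, hcard⟩ :=
    wreath_extension_is_stringCGroup_general hΓ hfix hφ (eq_wreathGenerators ρ hs hlast)
  exact ⟨hgen, hS, hbase, ⟨fun j _ _ => hinner ⟨j - 1, by omega⟩ ⟨j, by omega⟩,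
    houter ⟨m - 1, by omega⟩ (Nat.sub_add_cancel hm)⟩, hcard⟩
end

section
/- Suppose R and Q are abstract n-polytopes and η̄ : Mon(R) → Mon(Q) is an epimorphism of sggi's, i.e. a group epimorphism mapping the j-th monodromy generator of R to the j-th monodromy generator of Q for each j. Suppose also that there are flags Λ' of R and Λ of Q such that the image under η̄ of the stabilizer of Λ' in Mon(R) is contained in the stabilizer of Λ in Mon(Q). Then there is a unique covering η : R → Q which maps Λ' to Λ. -/
/-!
Since the monodromy group of `R` acts transitively on flags, the stabilizer condition says that
`w Λ' ↦ η̄(w) Λ` is a well-defined map of flags, and it preserves `j`-adjacency because `η̄` sends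
generators to generators.  Such a map descends to faces: any two flags through a face `F` are
joined by `j`-adjacencies with `j ≠ rk F`, and the images of these leave the face of rank `rk F`
untouched.  Conversely a covering acts on flags preserving adjacency, so connectedness propagates
its values from `Λ'` to all flags, hence to all faces.
-/

section Flags

variable {P : Type*}

theorem isMaxChain_of_forall_mem_iff [Preorder P] {s : Set P}
    (h : ∀ x, x ∈ s ↔ ∀ y ∈ s, x ≤ y ∨ y ≤ x) : IsMaxChain (· ≤ ·) s :=
  ⟨fun x hx y hy _ => (h x).1 hx y hy,
    fun _ ht hst => hst.antisymm fun x hx => (h x).2 fun _ hy => ht.total hx (hst hy)⟩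

/-- The part of the flag `c` inside the section `G / F`, for faces `F` and `G` of `c`;
`flagGlue` recovers a flag from its restrictions to the two sections at one of its faces. -/
def flagRestrict [Preorder P] (c : Flag P) {F G : P} (hF : F ∈ c) (hG : G ∈ c) :
    Flag (Set.Icc F G) :=
  Flag.ofIsMaxChain {x | (x : P) ∈ c} <| isMaxChain_of_forall_mem_iff fun x => by
    refine ⟨fun hx y hy => c.le_or_le hx hy, fun hx => ?_⟩
    refine Flag.mem_iff_forall_le_or_ge.2 fun y hy => ?_
    rcases c.le_or_le hF hy with hFy | hyF
    · rcases c.le_or_le hG hy with hGy | hyG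
      · exact .inl (x.2.2.trans hGy)
      · exact hx ⟨y, hFy, hyG⟩ hy
    · exact .inr (hyF.trans x.2.1)

section Glue

variable [PartialOrder P] [BoundedOrder P] {H : P}

theorem top_mem_flag_Icc (a : Flag (Set.Icc ⊥ H)) : ⟨H, bot_le, le_rfl⟩ ∈ a :=
  Flag.mem_iff_forall_le_or_ge.2 fun y _ => .inr y.2.2

theorem bot_mem_flag_Icc (b : Flag (Set.Icc H ⊤)) : ⟨H, le_rfl, le_top⟩ ∈ b :=
  Flag.mem_iff_forall_le_or_ge.2 fun y _ => .inl y.2.1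

/-- The flag through `H` composed of a flag of the section `H / ⊥` and a flag of `⊤ / H`;
it carries adjacency paths inside either section over to `P`. -/
def flagGlue (a : Flag (Set.Icc ⊥ H)) (b : Flag (Set.Icc H ⊤)) : Flag P :=
  Flag.ofIsMaxChain {x | (∃ h, ⟨x, h⟩ ∈ a) ∨ ∃ h, ⟨x, h⟩ ∈ b} <|
    isMaxChain_of_forall_mem_iff fun x => by
      constructor
      · rintro (⟨hx, hxa⟩ | ⟨hx, hxb⟩) y (⟨hy, hya⟩ | ⟨hy, hyb⟩)
        · exact a.le_or_le hxa hya
        · exact .inl (hx.2.trans hy.1)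
        · exact .inr (hy.2.trans hx.1)
        · exact b.le_or_le hxb hyb
      · intro hx
        rcases hx H (.inl ⟨_, top_mem_flag_Icc a⟩) with hxH | hHx
        · exact .inl ⟨⟨bot_le, hxH⟩,
            Flag.mem_iff_forall_le_or_ge.2 fun y hy => hx y (.inl ⟨y.2, hy⟩)⟩
        · exact .inr ⟨⟨hHx, le_top⟩,
            Flag.mem_iff_forall_le_or_ge.2 fun y hy => hx y (.inr ⟨y.2, hy⟩)⟩

variable {a : Flag (Set.Icc ⊥ H)} {b : Flag (Set.Icc H ⊤)}

theorem mem_flagGlue {x : P} : x ∈ flagGlue a b ↔ (∃ h, ⟨x, h⟩ ∈ a) ∨ ∃ h, ⟨x, h⟩ ∈ b :=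
  Iff.rfl

theorem self_mem_flagGlue : H ∈ flagGlue a b :=
  .inl ⟨_, top_mem_flag_Icc a⟩

theorem coe_mem_flagGlue_left {x : Set.Icc ⊥ H} : (x : P) ∈ flagGlue a b ↔ x ∈ a := by
  refine ⟨?_, fun hx => .inl ⟨x.2, hx⟩⟩
  rintro (⟨_, hx⟩ | ⟨hHx, _⟩)
  · exact hx
  · rw [show x = ⟨H, bot_le, le_rfl⟩ from Subtype.ext (x.2.2.antisymm hHx.1)]
    exact top_mem_flag_Icc a

theorem coe_mem_flagGlue_right {x : Set.Icc H ⊤} : (x : P) ∈ flagGlue a b ↔ x ∈ b := by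
  refine ⟨?_, fun hx => .inr ⟨x.2, hx⟩⟩
  rintro (⟨hxH, _⟩ | ⟨_, hx⟩)
  · rw [show x = ⟨H, le_rfl, le_top⟩ from Subtype.ext (hxH.2.antisymm x.2.1)]
    exact bot_mem_flag_Icc b
  · exact hx

theorem flagGlue_flagRestrict {c : Flag P} (hH : H ∈ c) :
    flagGlue (flagRestrict c c.bot_mem hH) (flagRestrict c hH c.top_mem) = c := by
  refine SetLike.ext fun x => ⟨?_, fun hx => ?_⟩
  · rintro (⟨_, hx⟩ | ⟨_, hx⟩) <;> exact hx
  · exact (c.le_or_le hx hH).imp (fun h => ⟨⟨bot_le, h⟩, hx⟩) fun h => ⟨⟨h, le_top⟩, hx⟩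

end Glue

section StrictMono

variable [PartialOrder P] {α : Type*} [Preorder α] {rk : P → α} {c : Flag P} {F G : P}

theorem le_of_mem_flag_of_rank_le (hrk : StrictMono rk) (hF : F ∈ c) (hG : G ∈ c)
    (h : rk F ≤ rk G) : F ≤ G :=
  (c.le_or_le hF hG).elim id fun hGF =>
    hGF.eq_or_lt.elim Eq.ge fun hlt => absurd (hrk hlt) h.not_gt

theorem lt_of_mem_flag_of_rank_lt (hrk : StrictMono rk) (hF : F ∈ c) (hG : G ∈ c)
    (h : rk F < rk G) : F < G :=
  (le_of_mem_flag_of_rank_le hrk hF hG h.le).lt_of_ne fun hFG => h.ne (congrArg rk hFG)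

theorem eq_of_mem_flag_of_rank_eq (hrk : StrictMono rk) (hF : F ∈ c) (hG : G ∈ c)
    (h : rk F = rk G) : F = G :=
  (le_of_mem_flag_of_rank_le hrk hF hG h.le).antisymm (le_of_mem_flag_of_rank_le hrk hG hF h.ge)

end StrictMono

end Flags

namespace IsPolytopeAdj

variable {P : Type*} [PartialOrder P] {rk : P → ℤ} {j : ℤ} {c d : Flag P}

theorem exists_mem_rank_eq (h : IsPolytopeAdj rk j c d) : ∃ F ∈ d, rk F = j := by
  by_contra! hd
  exact h.1 (Flag.ext (d.max_chain' c.chain_le fun F hF => (h.2 F (hd F hF)).2 hF).symm)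

theorem exists_mem_rank_eq_of_mem (h : IsPolytopeAdj rk j c d) {F : P} (hF : F ∈ c) :
    ∃ G ∈ d, rk G = rk F := by
  by_cases hj : rk F = j
  · simpa only [hj] using h.exists_mem_rank_eq
  · exact ⟨F, (h.2 F hj).1 hF, rfl⟩

theorem ne_rank_of_mem (h : IsPolytopeAdj rk j c d) (hrk : StrictMono rk) {F : P} (hc : F ∈ c)
    (hd : F ∈ d) : j ≠ rk F := by
  rintro rfl
  refine h.1 (SetLike.ext fun G => ?_)
  by_cases hG : rk G = rk F
  · exact ⟨fun hGc => eq_of_mem_flag_of_rank_eq hrk hGc hc hG ▸ hd,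
      fun hGd => eq_of_mem_flag_of_rank_eq hrk hGd hd hG ▸ hc⟩
  · exact h.2 G hG

section Glue

variable [BoundedOrder P] {H : P}

theorem flagGlue_left {a a' : Flag (Set.Icc ⊥ H)} (b : Flag (Set.Icc H ⊤))
    (h : IsPolytopeAdj (fun x : Set.Icc ⊥ H => rk x) j a a') :
    IsPolytopeAdj rk j (flagGlue a b) (flagGlue a' b) := by
  refine ⟨fun heq => h.1 (SetLike.ext fun x => ?_), fun F hF => ?_⟩
  · rw [← coe_mem_flagGlue_left (b := b), heq, coe_mem_flagGlue_left]
  · rw [mem_flagGlue, mem_flagGlue, exists_congr fun hF' => h.2 ⟨F, hF'⟩ hF]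

theorem flagGlue_right (a : Flag (Set.Icc ⊥ H)) {b b' : Flag (Set.Icc H ⊤)}
    (h : IsPolytopeAdj (fun x : Set.Icc H ⊤ => rk x) j b b') :
    IsPolytopeAdj rk j (flagGlue a b) (flagGlue a b') := by
  refine ⟨fun heq => h.1 (SetLike.ext fun x => ?_), fun F hF => ?_⟩
  · rw [← coe_mem_flagGlue_right (a := a), heq, coe_mem_flagGlue_right]
  · rw [mem_flagGlue, mem_flagGlue, exists_congr fun hF' => h.2 ⟨F, hF'⟩ hF]

end Glue

end IsPolytopeAdj

/-- An abstract pre-polytope of rank `n`: all the axioms of a polytope except connectedness,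
so that flags still have unique `j`-adjacent flags but need not be joined by adjacencies.
Without connectedness, a rank function onto `{-1, …, n}` no longer forces every flag to have a
face of each rank, so this is required explicitly. -/
structure IsPrepolytope {P : Type*} [PartialOrder P] (n : ℤ) (rk : P → ℤ) : Prop where
  strictMono : StrictMono rk
  rank_mem_Icc : ∀ F, rk F ∈ Set.Icc (-1) n
  exists_mem_rank_eq : ∀ (c : Flag P) {r : ℤ}, r ∈ Set.Icc (-1) n → ∃ F ∈ c, rk F = r
  exists_bot : ∃ F₀ : P, ∀ F, F₀ ≤ F
  exists_top : ∃ Fn : P, ∀ F, F ≤ Fn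
  diamond : ∀ F G : P, F < G → rk G = rk F + 2 →
    ∃ H₁ H₂ : P, H₁ ≠ H₂ ∧ ∀ H : P, (F < H ∧ H < G) ↔ (H = H₁ ∨ H = H₂)

namespace IsAbstractPolytope

variable {P : Type*} [PartialOrder P] {n : ℤ} {rk : P → ℤ}

theorem reflTransGen_adj_of_mem (hP : IsAbstractPolytope n rk) {c d : Flag P} {H : P}
    (hc : H ∈ c) (hd : H ∈ d) :
    Relation.ReflTransGen (fun c' d' => ∃ j ≠ rk H, IsPolytopeAdj rk j c' d') c d := by
  obtain ⟨B, hB⟩ := hP.exists_bot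
  obtain ⟨T, hT⟩ := hP.exists_top
  let _ : BoundedOrder P := { bot := B, bot_le := hB, top := T, le_top := hT }
  have hne {j : ℤ} {a a' : Flag (Set.Icc ⊥ H)} {b b' : Flag (Set.Icc H ⊤)}
      (h : IsPolytopeAdj rk j (flagGlue a b) (flagGlue a' b')) : j ≠ rk H :=
    h.ne_rank_of_mem (fun _ _ => hP.strictMono) self_mem_flagGlue self_mem_flagGlue
  let adjFixing (c' d' : Flag P) : Prop := ∃ j ≠ rk H, IsPolytopeAdj rk j c' d'
  have path_left (a a' : Flag (Set.Icc ⊥ H)) (b : Flag (Set.Icc H ⊤)) :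
      Relation.ReflTransGen adjFixing (flagGlue a b) (flagGlue a' b) :=
    (hP.strongly_connected ⊥ H bot_le a a').lift (flagGlue · b) fun _ _ ⟨j, h⟩ =>
      have hglue := h.flagGlue_left b
      ⟨j, hne hglue, hglue⟩
  have path_right (a : Flag (Set.Icc ⊥ H)) (b b' : Flag (Set.Icc H ⊤)) :
      Relation.ReflTransGen adjFixing (flagGlue a b) (flagGlue a b') :=
    (hP.strongly_connected H ⊤ le_top b b').lift (flagGlue a) fun _ _ ⟨j, h⟩ =>
      have hglue := h.flagGlue_right a
      ⟨j, hne hglue, hglue⟩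
  rw [← flagGlue_flagRestrict hc, ← flagGlue_flagRestrict hd]
  exact (path_left _ _ _).trans (path_right _ _ _)

theorem reflTransGen_adj (hP : IsAbstractPolytope n rk) (c d : Flag P) :
    Relation.ReflTransGen (fun c' d' => ∃ j, IsPolytopeAdj rk j c' d') c d := by
  obtain ⟨B, hB⟩ := hP.exists_bot
  have hBmem (c : Flag P) : B ∈ c := Flag.mem_iff_forall_le_or_ge.2 fun F _ => .inl (hB F)
  exact Relation.ReflTransGen.mono (fun _ _ ⟨j, _, h⟩ => ⟨j, h⟩) _ _
    (hP.reflTransGen_adj_of_mem (hBmem c) (hBmem d))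

theorem exists_mem_rank_eq (hP : IsAbstractPolytope n rk) (c : Flag P) {r : ℤ}
    (hr : r ∈ Set.Icc (-1) n) : ∃ F ∈ c, rk F = r := by
  obtain ⟨G, rfl⟩ : r ∈ Set.range rk := hP.rank_range ▸ hr
  obtain ⟨d, hd⟩ := Flag.exists_mem G
  induction hP.reflTransGen_adj d c with
  | refl => exact ⟨G, hd, rfl⟩
  | tail _ hadj ih =>
    obtain ⟨F, hF, hFG⟩ := ih
    obtain ⟨j, hj⟩ := hadj
    exact hFG ▸ hj.exists_mem_rank_eq_of_mem hF

theorem isPrepolytope (hP : IsAbstractPolytope n rk) : IsPrepolytope n rk where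
  strictMono _ _ := hP.strictMono
  rank_mem_Icc F := hP.rank_range ▸ Set.mem_range_self F
  exists_mem_rank_eq := hP.exists_mem_rank_eq
  exists_bot := hP.exists_bot
  exists_top := hP.exists_top
  diamond := hP.diamond

end IsAbstractPolytope

namespace IsPrepolytope

variable {P : Type*} [PartialOrder P] {n : ℤ} {rk : P → ℤ}

theorem adj_index_mem_Ico (hP : IsPrepolytope n rk) {j : ℤ} {c d : Flag P}
    (h : IsPolytopeAdj rk j c d) : j ∈ Set.Ico 0 n := by
  obtain ⟨B, hB⟩ := hP.exists_bot
  obtain ⟨T, hT⟩ := hP.exists_top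
  have hBmem (c : Flag P) : B ∈ c := Flag.mem_iff_forall_le_or_ge.2 fun F _ => .inl (hB F)
  have hTmem (c : Flag P) : T ∈ c := Flag.mem_iff_forall_le_or_ge.2 fun F _ => .inr (hT F)
  have hjB : j ≠ rk B := h.ne_rank_of_mem hP.strictMono (hBmem c) (hBmem d)
  have hjT : j ≠ rk T := h.ne_rank_of_mem hP.strictMono (hTmem c) (hTmem d)
  obtain ⟨F, -, rfl⟩ := h.exists_mem_rank_eq
  have hBF : rk B ≤ rk F := hP.strictMono.monotone (hB F)
  have hFT : rk F ≤ rk T := hP.strictMono.monotone (hT F)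
  have hB1 := (hP.rank_mem_Icc B).1
  have hTn := (hP.rank_mem_Icc T).2
  rw [Set.mem_Ico]
  omega

theorem eq_of_mem_Ioo_of_ne (hP : IsPrepolytope n rk) {F G x y z : P} (hFG : rk G = rk F + 2)
    (hx : x ∈ Set.Ioo F G) (hy : y ∈ Set.Ioo F G) (hz : z ∈ Set.Ioo F G) (hxy : x ≠ y)
    (hxz : x ≠ z) : y = z := by
  obtain ⟨H₁, H₂, -, hH⟩ := hP.diamond F G (hx.1.trans hx.2) hFG
  have hx' := (hH x).1 hx
  have hy' := (hH y).1 hy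
  have hz' := (hH z).1 hz
  grind

theorem adj_unique (hP : IsPrepolytope n rk) {j : ℤ} {c d e : Flag P}
    (hd : IsPolytopeAdj rk j c d) (he : IsPolytopeAdj rk j c e) : d = e := by
  obtain ⟨hj0, hjn⟩ := hP.adj_index_mem_Ico hd
  obtain ⟨F, hF, hFj⟩ := hP.exists_mem_rank_eq c (r := j - 1) ⟨by omega, by omega⟩
  obtain ⟨G, hG, hGj⟩ := hP.exists_mem_rank_eq c (r := j + 1) ⟨by omega, by omega⟩
  obtain ⟨x, hx, hxj⟩ := hP.exists_mem_rank_eq c (r := j) ⟨by omega, by omega⟩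
  obtain ⟨y, hy, hyj⟩ := hd.exists_mem_rank_eq
  obtain ⟨z, hz, hzj⟩ := he.exists_mem_rank_eq
  have between {c' : Flag P} {H : P} (hF' : F ∈ c') (hG' : G ∈ c') (hH : H ∈ c')
      (hHj : rk H = j) : H ∈ Set.Ioo F G :=
    ⟨lt_of_mem_flag_of_rank_lt hP.strictMono hF' hH (by omega),
      lt_of_mem_flag_of_rank_lt hP.strictMono hH hG' (by omega)⟩
  have hyz : y = z := hP.eq_of_mem_Ioo_of_ne (by omega) (between hF hG hx hxj)
    (between ((hd.2 F (by omega)).1 hF) ((hd.2 G (by omega)).1 hG) hy hyj)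
    (between ((he.2 F (by omega)).1 hF) ((he.2 G (by omega)).1 hG) hz hzj)
    (fun hxy => hd.ne_rank_of_mem hP.strictMono hx (hxy ▸ hy) hxj.symm)
    (fun hxz => he.ne_rank_of_mem hP.strictMono hx (hxz ▸ hz) hxj.symm)
  by_contra hne
  have hde : IsPolytopeAdj rk j d e := ⟨hne, fun H hH => (hd.2 H hH).symm.trans (he.2 H hH)⟩
  exact hde.ne_rank_of_mem hP.strictMono hy (hyz ▸ hz) hyj.symm

theorem exists_generator_apply_eq {n : ℕ} (hP : IsPrepolytope (n : ℤ) rk)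
    {g : Fin n → Equiv.Perm (Flag P)}
    (hg : ∀ (i : Fin n) (Φ : Flag P), IsPolytopeAdj rk (i : ℤ) Φ (g i Φ)) {j : ℤ} {c d : Flag P}
    (h : IsPolytopeAdj rk j c d) : ∃ i : Fin n, (i : ℤ) = j ∧ g i c = d := by
  obtain ⟨hj0, hjn⟩ := hP.adj_index_mem_Ico h
  lift j to ℕ using hj0
  exact ⟨⟨j, by omega⟩, rfl, hP.adj_unique (hg ⟨j, by omega⟩ c) h⟩

end IsPrepolytope

section FlagMaps

variable {R Q : Type*} [PartialOrder R] [PartialOrder Q] {n : ℤ} {rkR : R → ℤ} {rkQ : Q → ℤ}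

/-- A map of flags preserves adjacency if it sends `j`-adjacent flags to `j`-adjacent flags, for
every `j`.  Coverings are studied through the maps of flags they induce. -/
def PreservesAdj (rkR : R → ℤ) (rkQ : Q → ℤ) (f : Flag R → Flag Q) : Prop :=
  ∀ ⦃j : ℤ⦄ ⦃c d : Flag R⦄, IsPolytopeAdj rkR j c d → IsPolytopeAdj rkQ j (f c) (f d)

namespace PreservesAdj

variable {f f' : Flag R → Flag Q}

theorem eq_of_apply_eq (hf : PreservesAdj rkR rkQ f) (hf' : PreservesAdj rkR rkQ f')
    (hR : IsAbstractPolytope n rkR) (hQ : IsPrepolytope n rkQ) {Λ : Flag R} (h : f Λ = f' Λ) :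
    f = f' := by
  funext c
  induction hR.reflTransGen_adj Λ c with
  | refl => exact h
  | tail _ hadj ih =>
    obtain ⟨j, hj⟩ := hadj
    exact hQ.adj_unique (hf hj) (ih ▸ hf' hj)

theorem exists_face_map (hf : PreservesAdj rkR rkQ f) (hR : IsAbstractPolytope n rkR)
    (hQ : IsPrepolytope n rkQ) :
    ∃ η : R → Q, (∀ F, rkQ (η F) = rkR F) ∧ ∀ c, ∀ F ∈ c, η F ∈ f c := by
  choose Φ hΦ using fun F : R => Flag.exists_mem F
  choose η hη hηrk using fun F : R =>
    hQ.exists_mem_rank_eq (f (Φ F)) (hR.isPrepolytope.rank_mem_Icc F)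
  refine ⟨η, hηrk, fun c F hF => ?_⟩
  have hpath := hR.reflTransGen_adj_of_mem (hΦ F) hF
  clear hF
  induction hpath with
  | refl => exact hη F
  | tail _ hadj ih =>
    obtain ⟨j, hjF, hj⟩ := hadj
    exact ((hf hj).2 (η F) (hηrk F ▸ hjF.symm)).1 ih

theorem exists_covering (hf : PreservesAdj rkR rkQ f) (hR : IsAbstractPolytope n rkR)
    (hQ : IsPrepolytope n rkQ) :
    ∃ η : R → Q, IsPolytopeCovering rkR rkQ η ∧ ∀ c : Flag R, η '' c = f c := by
  obtain ⟨η, hηrk, hη⟩ := hf.exists_face_map hR hQ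
  have image_flag (c : Flag R) : η '' c = f c := by
    refine (Set.image_subset_iff.2 (hη c)).antisymm fun z hz => ?_
    obtain ⟨F, hF, hFz⟩ := hR.exists_mem_rank_eq c (hQ.rank_mem_Icc z)
    exact ⟨F, hF, eq_of_mem_flag_of_rank_eq hQ.strictMono (hη c F hF) hz ((hηrk F).trans hFz)⟩
  have monotone : Monotone η := fun F G hFG => by
    obtain ⟨c, hF, hG⟩ := Flag.exists_mem_mem hFG
    refine le_of_mem_flag_of_rank_le hQ.strictMono (hη c F hF) (hη c G hG) ?_
    simpa only [hηrk] using hR.isPrepolytope.strictMono.monotone hFG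
  refine ⟨η, ⟨monotone, hηrk, fun c => ⟨f c, image_flag c⟩, fun j c d c' d' hc hd h => ?_⟩,
    image_flag⟩
  rw [← Flag.ext ((image_flag c).symm.trans hc), ← Flag.ext ((image_flag d).symm.trans hd)]
  exact hf h

end PreservesAdj

namespace IsPolytopeCovering

variable {η θ : R → Q}

theorem exists_flag_map (hη : IsPolytopeCovering rkR rkQ η) :
    ∃ f : Flag R → Flag Q, PreservesAdj rkR rkQ f ∧ ∀ c : Flag R, η '' c = f c := by
  obtain ⟨-, -, hflag, hadj⟩ := hη
  choose f hf using hflag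
  exact ⟨f, fun j c d => hadj j c d _ _ (hf c) (hf d), hf⟩

theorem eq_of_image_eq (hη : IsPolytopeCovering rkR rkQ η) (hθ : IsPolytopeCovering rkR rkQ θ)
    (hR : IsAbstractPolytope n rkR) (hQ : IsPrepolytope n rkQ) {Λ : Flag R}
    (h : η '' Λ = θ '' Λ) : η = θ := by
  obtain ⟨f, hf, hηf⟩ := hη.exists_flag_map
  obtain ⟨f', hf', hθf'⟩ := hθ.exists_flag_map
  obtain rfl : f = f' := hf.eq_of_apply_eq hf' hR hQ
    (Flag.ext ((hηf Λ).symm.trans (h.trans (hθf' Λ))))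
  funext F
  obtain ⟨c, hc⟩ := Flag.exists_mem F
  exact eq_of_mem_flag_of_rank_eq hQ.strictMono ((hηf c).le (Set.mem_image_of_mem η hc))
    ((hθf' c).le (Set.mem_image_of_mem θ hc)) ((hη.2.1 F).trans (hθ.2.1 F).symm)

end IsPolytopeCovering

end FlagMaps

section Monodromy

theorem exists_mulActionHom_apply_eq {G H X Y : Type*} [Group G] [Group H] [MulAction G X]
    [MulAction H Y] [MulAction.IsPretransitive G X] (φ : G →* H) {x : X} {y : Y}
    (h : MulAction.stabilizer G x ≤ (MulAction.stabilizer H y).comap φ) :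
    ∃ f : X →ₑ[φ] Y, f x = y := by
  choose w hw using MulAction.exists_smul_eq G x
  have well_defined (g g' : G) (hg : g • x = g' • x) : φ g • y = φ g' • y := by
    have hmem : g'⁻¹ * g ∈ MulAction.stabilizer G x := by
      rw [MulAction.mem_stabilizer_iff, mul_smul, hg, inv_smul_smul]
    simpa only [Subgroup.mem_comap, MulAction.mem_stabilizer_iff, map_mul, map_inv, mul_smul,
      inv_smul_eq_iff] using h hmem
  refine ⟨⟨fun c => φ (w c) • y, fun g c => ?_⟩, ?_⟩
  · rw [← mul_smul, ← map_mul]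
    exact well_defined _ _ (by rw [hw, mul_smul, hw])
  · exact (well_defined (w x) 1 (by rw [hw, one_smul])).trans (by rw [map_one, one_smul])

variable {n : ℕ} {R Q : Type*} [PartialOrder R] [PartialOrder Q] {rkR : R → ℤ} {rkQ : Q → ℤ}
  {gR : Fin n → Equiv.Perm (Flag R)} {gQ : Fin n → Equiv.Perm (Flag Q)}

theorem isPretransitive_closure_range_generators (hR : IsAbstractPolytope (n : ℤ) rkR)
    (hgR : ∀ (j : Fin n) (Φ : Flag R), IsPolytopeAdj rkR (j : ℤ) Φ (gR j Φ)) :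
    MulAction.IsPretransitive (Subgroup.closure (Set.range gR)) (Flag R) := by
  refine ⟨fun c d => ?_⟩
  induction hR.reflTransGen_adj c d with
  | refl => exact ⟨1, one_smul _ c⟩
  | tail _ hadj ih =>
    obtain ⟨w, rfl⟩ := ih
    obtain ⟨j, hj⟩ := hadj
    obtain ⟨i, -, rfl⟩ := hR.isPrepolytope.exists_generator_apply_eq hgR hj
    exact ⟨⟨gR i, Subgroup.subset_closure (Set.mem_range_self i)⟩ * w, mul_smul _ w c⟩

theorem preservesAdj_of_map_generators (hR : IsPrepolytope (n : ℤ) rkR)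
    (hgR : ∀ (j : Fin n) (Φ : Flag R), IsPolytopeAdj rkR (j : ℤ) Φ (gR j Φ))
    (hgQ : ∀ (j : Fin n) (Φ : Flag Q), IsPolytopeAdj rkQ (j : ℤ) Φ (gQ j Φ))
    {φ : Subgroup.closure (Set.range gR) →* Equiv.Perm (Flag Q)}
    (hφ : ∀ j : Fin n, φ ⟨gR j, Subgroup.subset_closure (Set.mem_range_self j)⟩ = gQ j)
    (f : Flag R →ₑ[φ] Flag Q) : PreservesAdj rkR rkQ f := by
  intro j c d h
  obtain ⟨i, rfl, rfl⟩ := hR.exists_generator_apply_eq hgR h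
  have hfi : f (gR i c) = gQ i (f c) :=
    (map_smulₛₗ f ⟨gR i, Subgroup.subset_closure (Set.mem_range_self i)⟩ c).trans
      (congrArg (· (f c)) (hφ i))
  exact hfi ▸ hgQ i (f c)

theorem covering_of_monodromy_epimorphism_general
    (hR : IsAbstractPolytope (n : ℤ) rkR) (hQ : IsPrepolytope (n : ℤ) rkQ)
    (hgR : ∀ (j : Fin n) (Φ : Flag R), IsPolytopeAdj rkR (j : ℤ) Φ (gR j Φ))
    (hgQ : ∀ (j : Fin n) (Φ : Flag Q), IsPolytopeAdj rkQ (j : ℤ) Φ (gQ j Φ))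
    (ebar : Subgroup.closure (Set.range gR) →* Equiv.Perm (Flag Q))
    (hebargen : ∀ j : Fin n,
      ebar ⟨gR j, Subgroup.subset_closure (Set.mem_range_self j)⟩ = gQ j)
    (Λ' : Flag R) (Λ : Flag Q)
    (hstab : ∀ w : Subgroup.closure (Set.range gR),
      (w : Equiv.Perm (Flag R)) Λ' = Λ' → (ebar w) Λ = Λ) :
    ∃! η : R → Q, IsPolytopeCovering rkR rkQ η ∧ η '' (↑Λ' : Set R) = (↑Λ : Set Q) := by
  have := isPretransitive_closure_range_generators hR hgR
  obtain ⟨f, hfΛ⟩ := exists_mulActionHom_apply_eq ebar (x := Λ') (y := Λ) hstab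
  have hf : PreservesAdj rkR rkQ f :=
    preservesAdj_of_map_generators hR.isPrepolytope hgR hgQ hebargen f
  obtain ⟨η, hη, hηf⟩ := hf.exists_covering hR hQ
  have hηΛ : η '' Λ' = Λ := by rw [hηf, hfΛ]
  exact ⟨η, ⟨hη, hηΛ⟩, fun θ ⟨hθ, hθΛ⟩ => hθ.eq_of_image_eq hη hR hQ (hθΛ.trans hηΛ.symm)⟩

end Monodromy

/-- **An epimorphism of monodromy groups compatible with flag stabilizers induces
a unique covering.**  Here `gR`, `gQ` are the monodromy generators of the
`n`-polytopes `R` and `Q` (sending each flag to its `j`-adjacent flag),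
`Mon(R) = ⟨gR 0, ..., gR (n-1)⟩`, and `ebar : Mon(R) → Mon(Q)` is an epimorphism of
sggi's, i.e. it maps each generator `gR j` to `gQ j`.  If the stabilizer of the
flag `Λ'` of `R` is mapped into the stabilizer of the flag `Λ` of `Q`, then there
is a unique covering `η : R → Q` mapping `Λ'` to `Λ`. -/
theorem covering_of_monodromy_epimorphism {n : ℕ} {R Q : Type}
    [PartialOrder R] [PartialOrder Q] (rkR : R → ℤ) (rkQ : Q → ℤ)
    (hR : IsAbstractPolytope (n : ℤ) rkR) (hQ : IsAbstractPolytope (n : ℤ) rkQ)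
    (gR : Fin n → Equiv.Perm (Flag R))
    (hgR : ∀ (j : Fin n) (Φ : Flag R), IsPolytopeAdj rkR (j : ℤ) Φ (gR j Φ))
    (gQ : Fin n → Equiv.Perm (Flag Q))
    (hgQ : ∀ (j : Fin n) (Φ : Flag Q), IsPolytopeAdj rkQ (j : ℤ) Φ (gQ j Φ))
    (ebar : ↥(Subgroup.closure (Set.range gR)) →* Equiv.Perm (Flag Q))
    (hebargen : ∀ j : Fin n,
      ebar ⟨gR j, Subgroup.subset_closure (Set.mem_range_self j)⟩ = gQ j)
    (hebarrange : ebar.range = Subgroup.closure (Set.range gQ))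
    (Λ' : Flag R) (Λ : Flag Q)
    (hstab : ∀ w : ↥(Subgroup.closure (Set.range gR)),
      (w : Equiv.Perm (Flag R)) Λ' = Λ' → (ebar w) Λ = Λ) :
    ∃! η : R → Q, IsPolytopeCovering rkR rkQ η ∧ η '' (↑Λ' : Set R) = (↑Λ : Set Q) :=
  covering_of_monodromy_epimorphism_general hR hQ.isPrepolytope hgR hgQ ebar hebargen Λ' Λ hstab
end
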